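/- arXiv:1804.01135 — 2 statements merged into one kernel-verified Lean document; each statement's English description precedes it below -/
import Mathlib

section
/- Let Ω ⊂ ℝ^d (d ≥ 1) be a bounded open set, let D_x be C¹ on an open neighborhood of cl(Ω) with a₀ ≤ D_x ≤ A₁ for constants 0 < a₀ ≤ A₁ and |∇D_x| ≤ A₂, let σ_{x,a} be continuous on cl(Ω) with 0 ≤ σ_{x,a} ≤ S̄, and let γ_x, β_x, β_f ∈ ℝ with β_f ≠ 0 and β_f + γ_x ≠ 0; set θ := (β_f - γ_x)/(β_f + γ_x), μ := β_x/β_f - 1 and b := -(2/(1+θ)) σ_{x,a} μ, and assume b ≥ 0 on Ω. Fix constants 0 < K₁₀ < K₉, M > 0, Q̄ > 0. Then there exists a constant K₁₄ > 0, depending only on these data, with the following property: for i = 1, 2, let σ_{x,f,i} be continuous on cl(Ω), let u_{0,i} ∈ C²(Ω) ∩ C¹(cl(Ω)) be positive classical solutions of -∇·(D_x∇u_{0,i}) + (σ_{x,a} + σ_{x,f,i})u_{0,i} = 0 in Ω with u_{0,1} = u_{0,2} on ∂Ω, satisfying K₁₀ ≤ u_{0,i} ≤ K₉ and |∇u_{0,i}|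 ≤ M on cl(Ω); set Q_i := γ_x D_x |∇u_{0,i}|² + (β_x σ_{x,a} + β_f σ_{x,f,i}) u_{0,i}² and c_i := (2/((1+θ)β_f)) Q_i, and assume |Q_i| ≤ Q̄ together with either (θ < 0, θ ≠ -1, and c₁ ≥ 0, c₂ ≥ 0) or (θ ≥ 0 and c₁ ≤ 0, c₂ ≤ 0). Then ‖σ_{x,f,1} - σ_{x,f,2}‖_{L¹(Ω)} ≤ K₁₄ ( ‖Q₁ - Q₂‖_{L¹(Ω)} + ‖Q₁ - Q₂‖_{L²(Ω)} + ‖Q₁ - Q₂‖²_{L²(Ω)} ). -/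
open Real Set MeasureTheory Filter Topology

/-- Divergence-form operator `∇·(a∇u)(x) = ∑ i ∂_i (a ∂_i u)(x)`. -/
noncomputable def divA {d : ℕ} (a u : EuclideanSpace ℝ (Fin d) → ℝ)
    (x : EuclideanSpace ℝ (Fin d)) : ℝ :=
  ∑ i : Fin d,
    fderiv ℝ (fun y => a y * fderiv ℝ u y (EuclideanSpace.single i (1 : ℝ))) x
      (EuclideanSpace.single i (1 : ℝ))

/-- Squared Euclidean norm of the gradient `|∇u|²(x)`. -/
noncomputable def gradSq {d : ℕ} (u : EuclideanSpace ℝ (Fin d) → ℝ)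
    (x : EuclideanSpace ℝ (Fin d)) : ℝ :=
  ∑ i : Fin d, (fderiv ℝ u x (EuclideanSpace.single i (1 : ℝ))) ^ 2


/-- `L²(Ω)` norm of a function. -/
noncomputable def normL2 {d : ℕ} (Ω : Set (EuclideanSpace ℝ (Fin d)))
    (f : EuclideanSpace ℝ (Fin d) → ℝ) : ℝ :=
  Real.sqrt (∫ x in Ω, (f x) ^ 2)

/-- `H¹(Ω)` norm of a function: `‖w‖² = ∫_Ω (|w|² + |∇w|²)`. -/
noncomputable def normH1 {d : ℕ} (Ω : Set (EuclideanSpace ℝ (Fin d)))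
    (f : EuclideanSpace ℝ (Fin d) → ℝ) : ℝ :=
  Real.sqrt (∫ x in Ω, ((f x) ^ 2 + ‖fderiv ℝ f x‖ ^ 2))

/-- `L¹(Ω)` norm of a function. -/
noncomputable def normL1 {d : ℕ} (Ω : Set (EuclideanSpace ℝ (Fin d)))
    (f : EuclideanSpace ℝ (Fin d) → ℝ) : ℝ :=
  ∫ x in Ω, |f x|

/-!
With `p = 2 / (1 + θ)`, the change of variables `Ψ = u ^ p` removes the gradient term: the diffusion
equation becomes `∇·(D∇Ψ) = b Ψ + c Ψ ^ (-θ)` with `c` a multiple of the datum `Q`, and the sign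
conditions on `b`, `θ` and `c` make the right-hand side monotone in `Ψ`. Testing the equation for
`w = Ψ₁ - Ψ₂`, which vanishes on `∂Ω`, with `w` therefore bounds `‖w‖_{H¹}` by `‖c₁ - c₂‖_{L²}`.
No regularity of `∂Ω` is needed: the test function is a `C¹` truncation of `w` vanishing where
`|w| ≤ ε`, hence compactly supported in `Ω`, and `ε → 0` is harmless because `∇w = 0` almost
everywhere on `{w = 0}`. Finally `β_f σ_f` is a Lipschitz function of `Q`, `Ψ` and `∇Ψ` on the
admissible range.
-/

/-! ### Calculus on open sets -/

theorem integrableOn_and_setIntegral_fderiv_eq_zero {E : Type*} [NormedAddCommGroup E]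
    [NormedSpace ℝ E] [FiniteDimensional ℝ E] [MeasurableSpace E] [BorelSpace E]
    {μ : Measure E} [μ.IsAddHaarMeasure] {Ω K : Set E} (hΩ : IsOpen Ω) (hK : IsCompact K)
    (hKΩ : K ⊆ Ω) {g : E → ℝ} (hg : ContDiffOn ℝ 1 g Ω) (hz : ∀ x ∈ Ω \ K, g x = 0) (v : E) :
    IntegrableOn (fun x => fderiv ℝ g x v) Ω μ ∧ ∫ x in Ω, fderiv ℝ g x v ∂μ = 0 := by
  set G : E → ℝ := Ω.indicator g with hG
  have eq_on : ∀ x ∈ Ω, G =ᶠ[𝓝 x] g := fun x hx => by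
    filter_upwards [hΩ.mem_nhds hx] with y hy
    exact indicator_of_mem hy g
  have eq_off : ∀ x ∉ K, G =ᶠ[𝓝 x] fun _ => 0 := fun x hx => by
    filter_upwards [hK.isClosed.isOpen_compl.mem_nhds hx] with y hy
    exact indicator_apply_eq_zero.mpr fun hyΩ => hz y ⟨hyΩ, hy⟩
  have G_contDiff : ContDiff ℝ 1 G := contDiff_iff_contDiffAt.mpr fun x => by
    by_cases hx : x ∈ K
    · exact (hg.contDiffAt (hΩ.mem_nhds (hKΩ hx))).congr_of_eventuallyEq (eq_on x (hKΩ hx))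
    · exact contDiffAt_const.congr_of_eventuallyEq (eq_off x hx)
  have G_supp : HasCompactSupport G := .intro hK fun x hx => (eq_off x hx).self_of_nhds
  have G'_int : Integrable (fun x => fderiv ℝ G x v) μ :=
    ((G_contDiff.continuous_fderiv one_ne_zero).clm_apply
      continuous_const).integrable_of_hasCompactSupport (G_supp.fderiv_apply ℝ v)
  have G'_eq : EqOn (fun x => fderiv ℝ G x v) (fun x => fderiv ℝ g x v) Ω := fun x hx => by
    simp only [(eq_on x hx).fderiv_eq]
  refine ⟨G'_int.integrableOn.congr_fun G'_eq hΩ.measurableSet, ?_⟩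
  rw [← setIntegral_congr_fun hΩ.measurableSet G'_eq,
    setIntegral_eq_integral_of_forall_compl_eq_zero]
  · simpa using integral_mul_fderiv_eq_neg_fderiv_mul_of_integrable (μ := μ) (𝕜 := ℝ)
      (f := fun _ => 1) (g := G) (v := v) (by simp) (by simpa using G'_int)
      (by simpa using G_contDiff.continuous.integrable_of_hasCompactSupport G_supp) (by simp)
      (fun x _ => G_contDiff.differentiable one_ne_zero x)
  · intro x hx
    rw [(eq_off x fun h => hx (hKΩ h)).fderiv_eq]
    simp

/-- At a density point of its zero set, a function is approximated to first order by `0`. -/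
theorem ae_fderiv_eq_zero_of_eq_zero {E : Type*} [NormedAddCommGroup E] [NormedSpace ℝ E]
    [FiniteDimensional ℝ E] [MeasurableSpace E] [BorelSpace E] {μ : Measure E}
    [μ.IsAddHaarMeasure] {Ω : Set E} (hΩ : IsOpen Ω) {w : E → ℝ} (hw : DifferentiableOn ℝ w Ω) :
    ∀ᵐ x ∂μ.restrict Ω, w x = 0 → fderiv ℝ w x = 0 := by
  rcases subsingleton_or_nontrivial E with _ | _
  · exact .of_forall fun x _ => Subsingleton.elim _ _
  obtain ⟨e, he⟩ := exists_ne (0 : E)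
  have s_eq : Ω ∩ w ⁻¹' {0} = Ω \ (Ω ∩ w ⁻¹' {0}ᶜ) := by
    ext x
    simp
  have s_meas : MeasurableSet (Ω ∩ w ⁻¹' {0}) := by
    rw [s_eq]
    exact hΩ.measurableSet.diff
      (hw.continuousOn.isOpen_inter_preimage hΩ isOpen_compl_singleton).measurableSet
  have approx : ApproximatesLinearOn (fun x => w x • e) (0 : E →L[ℝ] E) (Ω ∩ w ⁻¹' {0}) 0 := by
    rintro x ⟨-, hx⟩ y ⟨-, hy⟩
    simp_all
  have h := approx.norm_fderiv_sub_le μ s_meas (fun x => (fderiv ℝ w x).smulRight e)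
    fun x hx => ((hw.differentiableAt (hΩ.mem_nhds hx.1)).hasFDerivAt.smul_const
      e).hasFDerivWithinAt
  rw [ae_restrict_iff' s_meas] at h
  rw [ae_restrict_iff' hΩ.measurableSet]
  filter_upwards [h] with x hx hxΩ hwx
  have norm_zero : ‖(fderiv ℝ w x).smulRight e‖ = 0 := by
    simpa [← coe_nnnorm] using hx ⟨hxΩ, hwx⟩
  rw [ContinuousLinearMap.norm_smulRight_apply, mul_eq_zero] at norm_zero
  exact norm_eq_zero.mp (norm_zero.resolve_right (norm_ne_zero_iff.mpr he))

/-! ### A truncation of the identity -/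

/-- The derivative of `trunc ε`: it increases from `0` to `1` as `|t|` runs through `[ε, 2ε]`. -/
noncomputable def truncDeriv (ε t : ℝ) : ℝ :=
  min 1 (max 0 (|t| / ε - 1))

/-- A `C¹` approximation of the identity, for `ε > 0`, that vanishes on `[-ε, ε]`. Composing a
function vanishing on `∂Ω` with it gives a test function compactly supported in `Ω`. -/
noncomputable def trunc (ε s : ℝ) : ℝ :=
  ∫ t in (0 : ℝ)..s, truncDeriv ε t

section Trunc

variable {ε : ℝ}

theorem continuous_truncDeriv (ε : ℝ) : Continuous (truncDeriv ε) := by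
  unfold truncDeriv
  fun_prop

theorem truncDeriv_mem_Icc (ε t : ℝ) : truncDeriv ε t ∈ Icc (0 : ℝ) 1 :=
  ⟨le_min zero_le_one (le_max_left _ _), min_le_left _ _⟩

theorem truncDeriv_eq_zero (hε : 0 < ε) {t : ℝ} (ht : |t| ≤ ε) : truncDeriv ε t = 0 := by
  have : |t| / ε - 1 ≤ 0 := by rwa [sub_nonpos, div_le_one hε]
  simp [truncDeriv, max_eq_left this]

theorem truncDeriv_eq_one (hε : 0 < ε) {t : ℝ} (ht : 2 * ε ≤ |t|) : truncDeriv ε t = 1 := by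
  have : 1 ≤ |t| / ε - 1 := by
    rw [le_sub_iff_add_le, le_div_iff₀ hε]
    linarith
  rw [truncDeriv, max_eq_right (zero_le_one.trans this), min_eq_left this]

theorem tendsto_truncDeriv {t : ℝ} (ht : t ≠ 0) :
    Tendsto (fun ε => truncDeriv ε t) (𝓝[>] 0) (𝓝 1) := by
  have half_pos : 0 < |t| / 2 := half_pos (abs_pos.mpr ht)
  refine tendsto_const_nhds.congr' ?_
  filter_upwards [Ioo_mem_nhdsGT half_pos] with ε hε
  exact (truncDeriv_eq_one hε.1 (by linarith [hε.2])).symm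

theorem hasDerivAt_trunc (ε s : ℝ) : HasDerivAt (trunc ε) (truncDeriv ε s) s :=
  ((continuous_truncDeriv ε).integral_hasStrictDerivAt 0 s).hasDerivAt

theorem contDiff_trunc (ε : ℝ) : ContDiff ℝ 1 (trunc ε) := by
  have : deriv (trunc ε) = truncDeriv ε := funext fun s => (hasDerivAt_trunc ε s).deriv
  exact contDiff_one_iff_deriv.mpr
    ⟨fun s => (hasDerivAt_trunc ε s).differentiableAt, this ▸ continuous_truncDeriv ε⟩

theorem trunc_eq_zero (hε : 0 < ε) {s : ℝ} (hs : |s| ≤ ε) : trunc ε s = 0 := by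
  have : EqOn (truncDeriv ε) (fun _ => 0) (uIcc 0 s) := fun t ht => by
    have : |t| ≤ |s| := by simpa using abs_sub_left_of_mem_uIcc ht
    exact truncDeriv_eq_zero hε (this.trans hs)
  rw [trunc, intervalIntegral.integral_congr this, intervalIntegral.integral_zero]

theorem exists_trunc_eq_mul (ε s : ℝ) : ∃ ρ ∈ Icc (0 : ℝ) 1, trunc ε s = ρ * s := by
  refine ⟨∫ t in (0 : ℝ)..1, truncDeriv ε (s * t), ⟨?_, ?_⟩, ?_⟩
  · exact intervalIntegral.integral_nonneg zero_le_one fun t _ => (truncDeriv_mem_Icc ε _).1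
  · have := intervalIntegral.integral_mono_on (μ := volume) (zero_le_one' ℝ)
      (((continuous_truncDeriv ε).comp (continuous_const_mul s)).intervalIntegrable 0 1)
      (continuous_const.intervalIntegrable 0 1) fun t _ => (truncDeriv_mem_Icc ε (s * t)).2
    simpa using this
  · rw [mul_comm, ← smul_eq_mul, intervalIntegral.smul_integral_comp_mul_left]
    simp [trunc]

theorem tendsto_trunc (s : ℝ) : Tendsto (fun ε => trunc ε s) (𝓝[>] 0) (𝓝 s) := by
  have int_one : ∫ _ in (0 : ℝ)..s, (1 : ℝ) = s := by simp
  nth_rw 2 [← int_one]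
  refine intervalIntegral.tendsto_integral_filter_of_dominated_convergence (fun _ => 1)
    (.of_forall fun ε => (continuous_truncDeriv ε).aestronglyMeasurable) (.of_forall fun ε =>
      .of_forall fun t _ => ?_) (continuous_const.intervalIntegrable _ _) ?_
  · rw [Real.norm_of_nonneg (truncDeriv_mem_Icc ε t).1]
    exact (truncDeriv_mem_Icc ε t).2
  · filter_upwards [compl_mem_ae_iff.mpr (measure_singleton (0 : ℝ))] with t ht _
    exact tendsto_truncDeriv ht

end Trunc

/-! ### The operator `∇·(D∇u)` -/

section DivA

variable {d : ℕ} {D u v w : EuclideanSpace ℝ (Fin d) → ℝ} {x : EuclideanSpace ℝ (Fin d)}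

theorem gradSq_eq_norm_fderiv_sq (u : EuclideanSpace ℝ (Fin d) → ℝ)
    (x : EuclideanSpace ℝ (Fin d)) : gradSq u x = ‖fderiv ℝ u x‖ ^ 2 := by
  rw [gradSq, ← (InnerProductSpace.toDual ℝ (EuclideanSpace ℝ (Fin d))).symm.norm_map,
    EuclideanSpace.real_norm_sq_eq]
  refine Finset.sum_congr rfl fun i _ => ?_
  rw [← InnerProductSpace.toDual_symm_apply (𝕜 := ℝ) (y := fderiv ℝ u x),
    EuclideanSpace.inner_single_right]
  simp

theorem contDiffAt_mul_fderiv_apply (hD : ContDiffAt ℝ 1 D x) (hu : ContDiffAt ℝ 2 u x)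
    (e : EuclideanSpace ℝ (Fin d)) : ContDiffAt ℝ 1 (fun y => D y * fderiv ℝ u y e) x :=
  hD.mul ((hu.fderiv_right (m := 1) (by norm_num)).clm_apply contDiffAt_const)

theorem divA_sub (hD : ContDiffAt ℝ 1 D x) (hu : ContDiffAt ℝ 2 u x) (hv : ContDiffAt ℝ 2 v x) :
    divA D (u - v) x = divA D u x - divA D v x := by
  simp only [divA, ← Finset.sum_sub_distrib]
  refine Finset.sum_congr rfl fun i _ => ?_
  have flux_eq : (fun y => D y * fderiv ℝ (u - v) y (EuclideanSpace.single i 1)) =ᶠ[𝓝 x]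
      (fun y => D y * fderiv ℝ u y (EuclideanSpace.single i 1)) -
        fun y => D y * fderiv ℝ v y (EuclideanSpace.single i 1) := by
    filter_upwards [hu.eventually (by simp), hv.eventually (by simp)] with y hyu hyv
    rw [fderiv_sub (hyu.differentiableAt two_ne_zero) (hyv.differentiableAt two_ne_zero)]
    simp [mul_sub]
  rw [flux_eq.fderiv_eq,
    fderiv_sub ((contDiffAt_mul_fderiv_apply hD hu _).differentiableAt one_ne_zero)
      ((contDiffAt_mul_fderiv_apply hD hv _).differentiableAt one_ne_zero)]
  rfl

theorem sum_fderiv_mul_flux (hD : ContDiffAt ℝ 1 D x) (hu : ContDiffAt ℝ 2 u x) {c : ℝ}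
    (hv : HasFDerivAt v (c • fderiv ℝ u x) x) :
    ∑ i : Fin d, fderiv ℝ (fun y => v y * (D y * fderiv ℝ u y (EuclideanSpace.single i 1))) x
      (EuclideanSpace.single i 1) = v x * divA D u x + c * (D x * gradSq u x) := by
  have product_rule (i : Fin d) :
      fderiv ℝ (fun y => v y * (D y * fderiv ℝ u y (EuclideanSpace.single i 1))) x
          (EuclideanSpace.single i 1) =
        v x * fderiv ℝ (fun y => D y * fderiv ℝ u y (EuclideanSpace.single i 1)) x
          (EuclideanSpace.single i 1) +
        c * (D x * fderiv ℝ u x (EuclideanSpace.single i 1) ^ 2) := by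
    have flux_diff :=
      (contDiffAt_mul_fderiv_apply hD hu (EuclideanSpace.single i 1)).differentiableAt one_ne_zero
    rw [(hv.fun_mul flux_diff.hasFDerivAt).fderiv]
    simp only [add_apply, smul_apply, smul_eq_mul]
    ring
  simp only [product_rule, Finset.sum_add_distrib, divA, gradSq, Finset.mul_sum]

theorem divA_comp {F F' : ℝ → ℝ} {F'' : ℝ} (hD : ContDiffAt ℝ 1 D x) (hu : ContDiffAt ℝ 2 u x)
    (hF : ∀ᶠ y in 𝓝 x, HasDerivAt F (F' (u y)) (u y)) (hF' : HasDerivAt F' F'' (u x)) :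
    divA D (fun y => F (u y)) x = F' (u x) * divA D u x + F'' * (D x * gradSq u x) := by
  have hu' := (hu.differentiableAt two_ne_zero).hasFDerivAt
  rw [← sum_fderiv_mul_flux (v := fun y => F' (u y)) hD hu (hF'.comp_hasFDerivAt x hu')]
  refine Finset.sum_congr rfl fun i _ => ?_
  have flux_eq : (fun y => D y * fderiv ℝ (F ∘ u) y (EuclideanSpace.single i 1)) =ᶠ[𝓝 x] fun y =>
      F' (u y) * (D y * fderiv ℝ u y (EuclideanSpace.single i 1)) := by
    filter_upwards [hu.eventually (by simp), hF] with y hy hFy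
    rw [(hFy.comp_hasFDerivAt y (hy.differentiableAt two_ne_zero).hasFDerivAt).fderiv]
    simp only [smul_apply, smul_eq_mul]
    ring
  exact DFunLike.congr_fun flux_eq.fderiv_eq _

theorem divA_rpow (p : ℝ) (hD : ContDiffAt ℝ 1 D x) (hu : ContDiffAt ℝ 2 u x) (hux : 0 < u x) :
    divA D (fun y => u y ^ p) x =
      p * u x ^ (p - 1) * divA D u x +
        p * ((p - 1) * u x ^ (p - 2)) * (D x * gradSq u x) := by
  have eventually_pos : ∀ᶠ y in 𝓝 x, 0 < u y := hu.continuousAt.eventually_const_lt hux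
  have hF' := (hasDerivAt_rpow_const (p := p - 1) (.inl hux.ne')).const_mul p
  rw [divA_comp hD hu (eventually_pos.mono fun y hy => hasDerivAt_rpow_const (.inl hy.ne')) hF',
    sub_sub, one_add_one_eq_two]

end DivA

/-! ### Integration by parts and the Poincaré inequality -/

theorem integrableOn_of_continuousOn_of_eq_zero {X : Type*} [TopologicalSpace X] [T2Space X]
    [MeasurableSpace X] [BorelSpace X] {μ : Measure X} [IsFiniteMeasureOnCompacts μ]
    {Ω K : Set X} (hΩ : MeasurableSet Ω) (hK : IsCompact K) {g : X → ℝ}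
    (hg : ContinuousOn g K) (hz : ∀ x ∈ Ω \ K, g x = 0) : IntegrableOn g Ω μ :=
  (hg.integrableOn_compact hK).of_forall_sdiff_eq_zero hΩ hz

theorem setIntegral_sq_le_setIntegral_norm_fderiv_sq {E : Type*} [NormedAddCommGroup E]
    [NormedSpace ℝ E] [FiniteDimensional ℝ E] [MeasurableSpace E] [BorelSpace E]
    {μ : Measure E} [μ.IsAddHaarMeasure] {Ω K : Set E} (hΩ : IsOpen Ω) (hK : IsCompact K)
    (hKΩ : K ⊆ Ω) {ζ : E → ℝ} (hζ : ContDiffOn ℝ 1 ζ Ω) (hz : ∀ x ∈ Ω \ K, ζ x = 0)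
    {l : E →L[ℝ] ℝ} {e : E} (hle : l e = 1) (he : ‖e‖ = 1) {R : ℝ} (hR : ∀ x ∈ Ω, |l x| ≤ R) :
    ∫ x in Ω, ζ x ^ 2 ∂μ ≤ (2 * R) ^ 2 * ∫ x in Ω, ‖fderiv ℝ ζ x‖ ^ 2 ∂μ := by
  have fderiv_zero : ∀ x ∈ Ω \ K, fderiv ℝ ζ x = 0 := fun x hx => by
    have : ζ =ᶠ[𝓝 x] fun _ => 0 := by
      filter_upwards [(hΩ.sdiff hK.isClosed).mem_nhds hx] using hz
    simp [this.fderiv_eq]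
  have sq_int : IntegrableOn (fun x => ζ x ^ 2) Ω μ :=
    integrableOn_of_continuousOn_of_eq_zero hΩ.measurableSet hK
      ((hζ.continuousOn.mono hKΩ).pow 2) fun x hx => by simp [hz x hx]
  have fderiv_sq_int : IntegrableOn (fun x => ‖fderiv ℝ ζ x‖ ^ 2) Ω μ :=
    integrableOn_of_continuousOn_of_eq_zero hΩ.measurableSet hK
      (((hζ.continuousOn_fderiv_of_isOpen hΩ le_rfl).mono hKΩ).norm.pow 2)
      fun x hx => by simp [fderiv_zero x hx]
  -- The field `l ζ² e` has divergence `ζ² + 2 l ζ ∂ₑζ`, which Young's inequality bounds below.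
  obtain ⟨div_int, div_zero⟩ := integrableOn_and_setIntegral_fderiv_eq_zero (μ := μ) hΩ hK hKΩ
    (g := fun x => l x * ζ x ^ 2) (l.contDiff.contDiffOn.mul (hζ.pow 2))
    (fun x hx => by simp [hz x hx]) e
  have div_ge : ∀ x ∈ Ω, 1 / 2 * ζ x ^ 2 - 2 * R ^ 2 * ‖fderiv ℝ ζ x‖ ^ 2 ≤
      fderiv ℝ (fun y => l y * ζ y ^ 2) x e := fun x hx => by
    have hζx := ((hζ.contDiffAt (hΩ.mem_nhds hx)).differentiableAt one_ne_zero).hasFDerivAt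
    rw [(l.hasFDerivAt.fun_mul (hζx.pow 2)).fderiv]
    have bound : (l x * fderiv ℝ ζ x e) ^ 2 ≤ R ^ 2 * ‖fderiv ℝ ζ x‖ ^ 2 := by
      rw [mul_pow]
      refine mul_le_mul (sq_le_sq.mpr ((hR x hx).trans (le_abs_self R))) (sq_le_sq.mpr ?_)
        (sq_nonneg _) (sq_nonneg _)
      simpa [he] using (fderiv ℝ ζ x).le_opNorm e
    simp only [add_apply, smul_apply, hle, smul_eq_mul, nsmul_eq_mul]
    norm_num
    nlinarith [sq_nonneg (ζ x + 2 * (l x * fderiv ℝ ζ x e))]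
  have := setIntegral_mono_on ((sq_int.const_mul _).sub (fderiv_sq_int.const_mul _)) div_int
    hΩ.measurableSet div_ge
  rw [div_zero, integral_sub' (sq_int.const_mul _) (fderiv_sq_int.const_mul _),
    integral_const_mul, integral_const_mul] at this
  linarith

theorem integrableOn_and_setIntegral_mul_divA_add_eq_zero {d : ℕ}
    {Ω K : Set (EuclideanSpace ℝ (Fin d))} (hΩ : IsOpen Ω) (hK : IsCompact K) (hKΩ : K ⊆ Ω)
    {D u v c : EuclideanSpace ℝ (Fin d) → ℝ} (hD : ContDiffOn ℝ 1 D Ω) (hu : ContDiffOn ℝ 2 u Ω)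
    (hv : ContDiffOn ℝ 1 v Ω) (hv' : ∀ x ∈ Ω, HasFDerivAt v (c x • fderiv ℝ u x) x)
    (hz : ∀ x ∈ Ω \ K, v x = 0) :
    IntegrableOn (fun x => v x * divA D u x + c x * (D x * gradSq u x)) Ω ∧
      ∫ x in Ω, (v x * divA D u x + c x * (D x * gradSq u x)) = 0 := by
  have div_eq : EqOn (fun x => ∑ i : Fin d, fderiv ℝ
      (fun y => v y * (D y * fderiv ℝ u y (EuclideanSpace.single i 1))) x
        (EuclideanSpace.single i 1))
      (fun x => v x * divA D u x + c x * (D x * gradSq u x)) Ω := fun x hx =>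
    sum_fderiv_mul_flux (hD.contDiffAt (hΩ.mem_nhds hx)) (hu.contDiffAt (hΩ.mem_nhds hx))
      (hv' x hx)
  have flux_contDiffOn (i : Fin d) : ContDiffOn ℝ 1
      (fun y => v y * (D y * fderiv ℝ u y (EuclideanSpace.single i 1))) Ω := fun x hx =>
    ((hv.contDiffAt (hΩ.mem_nhds hx)).mul (contDiffAt_mul_fderiv_apply
      (hD.contDiffAt (hΩ.mem_nhds hx)) (hu.contDiffAt (hΩ.mem_nhds hx)) _)).contDiffWithinAt
  have component (i : Fin d) := integrableOn_and_setIntegral_fderiv_eq_zero (μ := volume) hΩ hK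
    hKΩ (flux_contDiffOn i) (fun x hx => by simp [hz x hx]) (EuclideanSpace.single i 1)
  refine ⟨IntegrableOn.congr_fun (integrable_finsetSum _ fun i _ => (component i).1) div_eq
    hΩ.measurableSet, ?_⟩
  rw [← setIntegral_congr_fun hΩ.measurableSet div_eq,
    integral_finsetSum _ fun i _ => (component i).1]
  exact Finset.sum_eq_zero fun i _ => (component i).2

/-! ### The energy estimate -/

section Energy

theorem isCompact_setOf_le_abs {E : Type*} [PseudoMetricSpace E] [ProperSpace E] {Ω : Set E}
    (hb : Bornology.IsBounded Ω) {w : E → ℝ} (hw : ContinuousOn w (closure Ω)) (ε : ℝ) :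
    IsCompact {x ∈ closure Ω | ε ≤ |w x|} :=
  hb.isCompact_closure.of_isClosed_subset
    (isClosed_closure.isClosed_le continuousOn_const hw.abs) fun _ hx => hx.1

theorem setOf_le_abs_subset {E : Type*} [TopologicalSpace E] {Ω : Set E} (hΩ : IsOpen Ω)
    {w : E → ℝ} (hw₀ : ∀ x ∈ frontier Ω, w x = 0) {ε : ℝ} (hε : 0 < ε) :
    {x ∈ closure Ω | ε ≤ |w x|} ⊆ Ω := fun x ⟨hx, hεx⟩ => by
  by_contra h
  have hwx : w x = 0 := hw₀ x (hΩ.frontier_eq ▸ ⟨hx, h⟩)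
  rw [hwx, abs_zero] at hεx
  exact hε.not_ge hεx

theorem neg_mul_abs_trunc_le {ε a s t : ℝ} (h : -(a * |s|) ≤ s * t) :
    -(a * |trunc ε s|) ≤ trunc ε s * t := by
  obtain ⟨ρ, hρ, h_eq⟩ := exists_trunc_eq_mul ε s
  rw [h_eq, abs_mul, abs_of_nonneg hρ.1]
  linarith [mul_le_mul_of_nonneg_left h hρ.1]

theorem abs_le_of_mem_diff {E : Type*} [TopologicalSpace E] {Ω : Set E} {w : E → ℝ} {ε : ℝ} {x : E}
    (hx : x ∈ Ω \ {x ∈ closure Ω | ε ≤ |w x|}) : |w x| ≤ ε := by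
  by_contra h
  exact hx.2 ⟨subset_closure hx.1, (not_le.mp h).le⟩

theorem continuousOn_norm_fderiv_sq {E : Type*} [NormedAddCommGroup E] [NormedSpace ℝ E]
    {Ω : Set E} {w : E → ℝ} (hΩ : IsOpen Ω) (hw : ContDiffOn ℝ 1 w Ω) :
    ContinuousOn (fun x => ‖fderiv ℝ w x‖ ^ 2) Ω :=
  (hw.continuousOn_fderiv_of_isOpen hΩ le_rfl).norm.pow 2

theorem mul_le_mul_sq_add_mul_sq (a b : ℝ) {η : ℝ} (hη : 0 < η) :
    a * b ≤ η * b ^ 2 + 1 / (4 * η) * a ^ 2 := by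
  have : η * b ^ 2 + 1 / (4 * η) * a ^ 2 - a * b = (2 * η * b - a) ^ 2 / (4 * η) := by
    field_simp
    ring
  linarith [show 0 ≤ (2 * η * b - a) ^ 2 / (4 * η) by positivity]

theorem hasFDerivAt_trunc_comp {E : Type*} [NormedAddCommGroup E] [NormedSpace ℝ E] {w : E → ℝ}
    {x : E} (ε : ℝ) (hw : DifferentiableAt ℝ w x) :
    HasFDerivAt (trunc ε ∘ w) (truncDeriv ε (w x) • fderiv ℝ w x) x :=
  (hasDerivAt_trunc ε (w x)).comp_hasFDerivAt x hw.hasFDerivAt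

variable {d : ℕ} {Ω : Set (EuclideanSpace ℝ (Fin d))}
  {D w f g : EuclideanSpace ℝ (Fin d) → ℝ} {a₀ R ε : ℝ}

theorem integrableOn_trunc_comp_sq (hb : Bornology.IsBounded Ω) (hwc : ContinuousOn w (closure Ω))
    (ε : ℝ) : IntegrableOn (fun x => trunc ε (w x) ^ 2) Ω :=
  ((((contDiff_trunc ε).continuous.comp_continuousOn hwc).pow 2).integrableOn_compact
    hb.isCompact_closure).mono_set subset_closure

theorem integrableOn_truncDeriv_comp_mul (hΩ : IsOpen Ω) (hb : Bornology.IsBounded Ω)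
    (hwc : ContinuousOn w (closure Ω)) (hw₀ : ∀ x ∈ frontier Ω, w x = 0) (hε : 0 < ε)
    (hg : ContinuousOn g Ω) : IntegrableOn (fun x => truncDeriv ε (w x) * g x) Ω := by
  have hKΩ := setOf_le_abs_subset hΩ hw₀ hε
  refine integrableOn_of_continuousOn_of_eq_zero hΩ.measurableSet (isCompact_setOf_le_abs hb hwc ε)
    (((continuous_truncDeriv ε).comp_continuousOn (hwc.mono fun x hx => hx.1)).mul
      (hg.mono hKΩ)) fun x hx => ?_
  rw [truncDeriv_eq_zero hε (abs_le_of_mem_diff hx), zero_mul]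

theorem mul_setIntegral_truncDeriv_mul_le (hΩ : IsOpen Ω) (hb : Bornology.IsBounded Ω)
    (hD : ContDiffOn ℝ 1 D Ω) (hDa : ∀ x ∈ Ω, a₀ ≤ D x) (hw : ContDiffOn ℝ 2 w Ω)
    (hwc : ContinuousOn w (closure Ω)) (hw₀ : ∀ x ∈ frontier Ω, w x = 0)
    (hf : IntegrableOn (fun x => f x ^ 2) Ω)
    (hdiv : ∀ x ∈ Ω, -(|f x| * |w x|) ≤ w x * divA D w x) (hε : 0 < ε) {η : ℝ} (hη : 0 < η) :
    a₀ * ∫ x in Ω, truncDeriv ε (w x) * ‖fderiv ℝ w x‖ ^ 2 ≤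
      η * (∫ x in Ω, trunc ε (w x) ^ 2) + 1 / (4 * η) * ∫ x in Ω, f x ^ 2 := by
  have hw1 : ContDiffOn ℝ 1 w Ω := hw.of_le one_le_two
  have trunc_int := (integrableOn_trunc_comp_sq hb hwc ε).const_mul η
  have grad_int := (integrableOn_truncDeriv_comp_mul hΩ hb hwc hw₀ hε
    (continuousOn_norm_fderiv_sq hΩ hw1)).const_mul a₀
  have f_int := hf.const_mul (1 / (4 * η))
  obtain ⟨green_int, green⟩ := integrableOn_and_setIntegral_mul_divA_add_eq_zero hΩ
    (isCompact_setOf_le_abs hb hwc ε) (setOf_le_abs_subset hΩ hw₀ hε) hD hw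
    ((contDiff_trunc ε).comp_contDiffOn hw1)
    (fun x hx => hasFDerivAt_trunc_comp ε
      ((hw1.contDiffAt (hΩ.mem_nhds hx)).differentiableAt one_ne_zero))
    (fun x hx => trunc_eq_zero hε (abs_le_of_mem_diff hx))
  have pointwise : ∀ x ∈ Ω, a₀ * (truncDeriv ε (w x) * ‖fderiv ℝ w x‖ ^ 2) -
      (η * trunc ε (w x) ^ 2 + 1 / (4 * η) * f x ^ 2) ≤
        trunc ε (w x) * divA D w x + truncDeriv ε (w x) * (D x * gradSq w x) := fun x hx => by
    have elliptic : a₀ * (truncDeriv ε (w x) * ‖fderiv ℝ w x‖ ^ 2) ≤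
        truncDeriv ε (w x) * (D x * gradSq w x) := by
      rw [gradSq_eq_norm_fderiv_sq, mul_left_comm]
      have := (truncDeriv_mem_Icc ε (w x)).1
      gcongr
      exact hDa x hx
    have young := mul_le_mul_sq_add_mul_sq |f x| |trunc ε (w x)| hη
    rw [sq_abs, sq_abs] at young
    linarith [neg_mul_abs_trunc_le (ε := ε) (hdiv x hx)]
  have := setIntegral_mono_on (grad_int.sub (trunc_int.add f_int)) green_int hΩ.measurableSet
    pointwise
  rw [green, integral_sub' grad_int (trunc_int.add f_int), integral_add' trunc_int f_int,
    integral_const_mul, integral_const_mul, integral_const_mul] at this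
  linarith

theorem setIntegral_trunc_sq_le (hΩ : IsOpen Ω) (hb : Bornology.IsBounded Ω)
    (hw : ContDiffOn ℝ 1 w Ω) (hwc : ContinuousOn w (closure Ω))
    (hw₀ : ∀ x ∈ frontier Ω, w x = 0) (i : Fin d) (hR : ∀ x ∈ Ω, |x i| ≤ R) (hε : 0 < ε) :
    ∫ x in Ω, trunc ε (w x) ^ 2 ≤
      (2 * R) ^ 2 * ∫ x in Ω, truncDeriv ε (w x) * ‖fderiv ℝ w x‖ ^ 2 := by
  have hwdiff : ∀ x ∈ Ω, DifferentiableAt ℝ w x := fun x hx =>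
    (hw.contDiffAt (hΩ.mem_nhds hx)).differentiableAt one_ne_zero
  refine (setIntegral_sq_le_setIntegral_norm_fderiv_sq (μ := volume) hΩ
    (isCompact_setOf_le_abs hb hwc ε) (setOf_le_abs_subset hΩ hw₀ hε)
    ((contDiff_trunc ε).comp_contDiffOn hw)
    (fun x hx => trunc_eq_zero hε (abs_le_of_mem_diff hx))
    (l := EuclideanSpace.proj i) (e := EuclideanSpace.single i 1) (by simp) (by simp) hR).trans ?_
  gcongr ?_ * ?_
  refine integral_mono_of_nonneg (.of_forall fun x => sq_nonneg _)
    (integrableOn_truncDeriv_comp_mul hΩ hb hwc hw₀ hε (continuousOn_norm_fderiv_sq hΩ hw)) ?_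
  filter_upwards [ae_restrict_mem hΩ.measurableSet] with x hx
  obtain ⟨k_nonneg, k_le_one⟩ := truncDeriv_mem_Icc ε (w x)
  rw [(hasFDerivAt_trunc_comp ε (hwdiff x hx)).fderiv, norm_smul, mul_pow,
    Real.norm_of_nonneg k_nonneg]
  gcongr
  exact pow_le_of_le_one k_nonneg k_le_one two_ne_zero

theorem setIntegral_trunc_sq_add_le (hΩ : IsOpen Ω) (hb : Bornology.IsBounded Ω)
    (i : Fin d) (hRpos : 0 < R) (hR : ∀ x ∈ Ω, |x i| ≤ R) (ha₀ : 0 < a₀)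
    (hD : ContDiffOn ℝ 1 D Ω) (hDa : ∀ x ∈ Ω, a₀ ≤ D x) (hw : ContDiffOn ℝ 2 w Ω)
    (hwc : ContinuousOn w (closure Ω)) (hw₀ : ∀ x ∈ frontier Ω, w x = 0)
    (hf : IntegrableOn (fun x => f x ^ 2) Ω)
    (hdiv : ∀ x ∈ Ω, -(|f x| * |w x|) ≤ w x * divA D w x) (hε : 0 < ε) :
    ∫ x in Ω, (trunc ε (w x) ^ 2 + truncDeriv ε (w x) * ‖fderiv ℝ w x‖ ^ 2) ≤
      ((2 * R) ^ 2 + 1) * (2 * R / a₀) ^ 2 * ∫ x in Ω, f x ^ 2 := by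
  have hw1 : ContDiffOn ℝ 1 w Ω := hw.of_le one_le_two
  have poincare := setIntegral_trunc_sq_le hΩ hb hw1 hwc hw₀ i hR hε
  -- With this `η` the Poincaré inequality absorbs half of the left-hand side.
  have energy := mul_setIntegral_truncDeriv_mul_le hΩ hb hD hDa hw hwc hw₀ hf hdiv hε
    (η := a₀ / (8 * R ^ 2)) (by positivity)
  rw [integral_add (integrableOn_trunc_comp_sq hb hwc ε)
    (integrableOn_truncDeriv_comp_mul hΩ hb hwc hw₀ hε (continuousOn_norm_fderiv_sq hΩ hw1))]
  set P := ∫ x in Ω, trunc ε (w x) ^ 2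
  set G := ∫ x in Ω, truncDeriv ε (w x) * ‖fderiv ℝ w x‖ ^ 2
  set F := ∫ x in Ω, f x ^ 2
  have grad_le : G ≤ (2 * R / a₀) ^ 2 * F := by
    have absorbed : a₀ * G ≤ a₀ / 2 * G + 2 * R ^ 2 / a₀ * F := by
      calc a₀ * G ≤ a₀ / (8 * R ^ 2) * P + 1 / (4 * (a₀ / (8 * R ^ 2))) * F := energy
        _ ≤ a₀ / (8 * R ^ 2) * ((2 * R) ^ 2 * G) + 1 / (4 * (a₀ / (8 * R ^ 2))) * F := by gcongr
        _ = a₀ / 2 * G + 2 * R ^ 2 / a₀ * F := by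
          field_simp
          ring
    have half : a₀ / 2 * G ≤ a₀ / 2 * ((2 * R / a₀) ^ 2 * F) := by
      calc a₀ / 2 * G ≤ 2 * R ^ 2 / a₀ * F := by linarith
        _ = a₀ / 2 * ((2 * R / a₀) ^ 2 * F) := by
          field_simp
    exact le_of_mul_le_mul_left half (by positivity)
  calc P + G ≤ ((2 * R) ^ 2 + 1) * G := by linarith
    _ ≤ ((2 * R) ^ 2 + 1) * ((2 * R / a₀) ^ 2 * F) := by gcongr
    _ = ((2 * R) ^ 2 + 1) * (2 * R / a₀) ^ 2 * F := by ring

theorem tendsto_setIntegral_trunc_sq_add (hΩ : IsOpen Ω) (hb : Bornology.IsBounded Ω)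
    (hw : ContDiffOn ℝ 1 w Ω) (hwc : ContinuousOn w (closure Ω))
    (hwint : IntegrableOn (fun x => ‖fderiv ℝ w x‖ ^ 2) Ω) :
    Tendsto (fun ε => ∫ x in Ω, (trunc ε (w x) ^ 2 + truncDeriv ε (w x) * ‖fderiv ℝ w x‖ ^ 2))
      (𝓝[>] 0) (𝓝 (∫ x in Ω, (w x ^ 2 + ‖fderiv ℝ w x‖ ^ 2))) := by
  have sq_int : IntegrableOn (fun x => w x ^ 2) Ω :=
    ((hwc.pow 2).integrableOn_compact hb.isCompact_closure).mono_set subset_closure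
  refine tendsto_integral_filter_of_dominated_convergence
    (fun x => w x ^ 2 + ‖fderiv ℝ w x‖ ^ 2) (.of_forall fun ε => ?_) (.of_forall fun ε => ?_)
    (Integrable.add sq_int hwint) ?_
  · exact ((((contDiff_trunc ε).continuous.comp_continuousOn hw.continuousOn).pow 2).add
      (((continuous_truncDeriv ε).comp_continuousOn hw.continuousOn).mul
        (continuousOn_norm_fderiv_sq hΩ hw))).aestronglyMeasurable hΩ.measurableSet
  · refine .of_forall fun x => ?_
    obtain ⟨k_nonneg, k_le_one⟩ := truncDeriv_mem_Icc ε (w x)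
    obtain ⟨ρ, ⟨ρ_nonneg, ρ_le_one⟩, trunc_eq⟩ := exists_trunc_eq_mul ε (w x)
    rw [Real.norm_of_nonneg (by positivity), trunc_eq, mul_pow]
    exact add_le_add (mul_le_of_le_one_left (sq_nonneg _) (pow_le_one₀ ρ_nonneg ρ_le_one))
      (mul_le_of_le_one_left (sq_nonneg _) k_le_one)
  · filter_upwards [ae_fderiv_eq_zero_of_eq_zero hΩ (hw.differentiableOn one_ne_zero)] with x hx
    refine ((tendsto_trunc (w x)).pow 2).add ?_
    rcases eq_or_ne (w x) 0 with hwx | hwx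
    · simp [hx hwx]
    · simpa using (tendsto_truncDeriv hwx).mul_const (‖fderiv ℝ w x‖ ^ 2)

theorem normH1_le_mul_normL2 (hΩ : IsOpen Ω) (hb : Bornology.IsBounded Ω)
    (i : Fin d) (hRpos : 0 < R) (hR : ∀ x ∈ Ω, |x i| ≤ R) (ha₀ : 0 < a₀)
    (hD : ContDiffOn ℝ 1 D Ω) (hDa : ∀ x ∈ Ω, a₀ ≤ D x) (hw : ContDiffOn ℝ 2 w Ω)
    (hwc : ContinuousOn w (closure Ω)) (hw₀ : ∀ x ∈ frontier Ω, w x = 0)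
    (hwint : IntegrableOn (fun x => ‖fderiv ℝ w x‖ ^ 2) Ω)
    (hf : IntegrableOn (fun x => f x ^ 2) Ω)
    (hdiv : ∀ x ∈ Ω, -(|f x| * |w x|) ≤ w x * divA D w x) :
    normH1 Ω w ≤ √((2 * R) ^ 2 + 1) * (2 * R / a₀) * normL2 Ω f := by
  have limit_le := le_of_tendsto
    (tendsto_setIntegral_trunc_sq_add hΩ hb (hw.of_le one_le_two) hwc hwint)
    (eventually_mem_nhdsWithin.mono fun ε hε =>
      setIntegral_trunc_sq_add_le hΩ hb i hRpos hR ha₀ hD hDa hw hwc hw₀ hf hdiv hε)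
  calc normH1 Ω w ≤ √(((2 * R) ^ 2 + 1) * (2 * R / a₀) ^ 2 * ∫ x in Ω, f x ^ 2) :=
        Real.sqrt_le_sqrt limit_le
    _ = √((2 * R) ^ 2 + 1) * (2 * R / a₀) * normL2 Ω f := by
      rw [normL2, Real.sqrt_mul (by positivity), Real.sqrt_mul (by positivity),
        Real.sqrt_sq (by positivity)]

end Energy

/-! ### Real powers on compact intervals -/

section Rpow

variable {m L : ℝ}

theorem exists_rpow_le (hm : 0 < m) (L r : ℝ) : ∃ B > 0, ∀ t ∈ Icc m L, t ^ r ≤ B := by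
  obtain ⟨B, hB⟩ := isCompact_Icc.exists_bound_of_continuousOn (f := fun t : ℝ => t ^ r)
    (s := Icc m L) (continuousOn_id.rpow_const fun t ht => .inl (hm.trans_le ht.1).ne')
  exact ⟨max B 1, by positivity, fun t ht =>
    (le_abs_self _).trans ((hB t ht).trans (le_max_left _ _))⟩

theorem exists_rpow_mem_Icc (hm : 0 < m) (L r : ℝ) :
    ∃ m' > 0, ∃ L', ∀ t ∈ Icc m L, t ^ r ∈ Icc m' L' := by
  obtain ⟨B, -, hB⟩ := exists_rpow_le hm L r
  obtain ⟨B', hB'pos, hB'⟩ := exists_rpow_le hm L (-r)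
  refine ⟨B'⁻¹, inv_pos.mpr hB'pos, B, fun t ht => ⟨?_, hB t ht⟩⟩
  have ht0 : 0 < t := hm.trans_le ht.1
  have := hB' t ht
  rw [rpow_neg ht0.le] at this
  exact inv_le_of_inv_le₀ (by positivity) this

theorem exists_abs_mul_rpow_sub_le (hm : 0 < m) (L B r : ℝ) :
    ∃ C > 0, ∀ s ∈ Icc m L, ∀ t ∈ Icc m L, ∀ a b : ℝ, |b| ≤ B →
      |a * s ^ r - b * t ^ r| ≤ C * (|a - b| + |s - t|) := by
  obtain ⟨P, hPpos, hP⟩ := exists_rpow_le hm L r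
  obtain ⟨Λ, hΛ⟩ := ContDiffOn.exists_lipschitzOnWith (n := 1)
    (f := fun t : ℝ => t ^ r) (s := Icc m L)
    (contDiffOn_id.rpow_const_of_ne fun t ht => (hm.trans_le ht.1).ne') one_ne_zero
    (convex_Icc m L) isCompact_Icc
  refine ⟨P + |B| * Λ, by positivity, fun s hs t ht a b hb => ?_⟩
  have lipschitz : |s ^ r - t ^ r| ≤ Λ * |s - t| := hΛ.dist_le_mul s hs t ht
  have rpow_nonneg : 0 ≤ s ^ r := Real.rpow_nonneg (hm.le.trans hs.1) r
  have hbB : |b| ≤ |B| := hb.trans (le_abs_self B)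
  calc |a * s ^ r - b * t ^ r| = |(a - b) * s ^ r + b * (s ^ r - t ^ r)| := by ring_nf
    _ ≤ |a - b| * s ^ r + |b| * |s ^ r - t ^ r| := by
      refine (abs_add_le _ _).trans_eq ?_
      rw [abs_mul, abs_mul, abs_of_nonneg rpow_nonneg]
    _ ≤ |a - b| * P + |B| * (Λ * |s - t|) := by
      gcongr
      exact hP s hs
    _ ≤ (P + |B| * Λ) * (|a - b| + |s - t|) := by
      have := mul_nonneg (mul_nonneg (abs_nonneg B) Λ.coe_nonneg) (abs_nonneg (a - b))
      have := mul_nonneg hPpos.le (abs_nonneg (s - t))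
      linarith

theorem mul_rpow_sub_mul_sub_nonneg {c x y θ : ℝ} (hx : 0 < x) (hy : 0 < y)
    (h : θ < 0 ∧ 0 ≤ c ∨ 0 ≤ θ ∧ c ≤ 0) : 0 ≤ c * ((x ^ (-θ) - y ^ (-θ)) * (x - y)) := by
  rcases h with ⟨hθ, hc⟩ | ⟨hθ, hc⟩
  · refine mul_nonneg hc ?_
    rcases le_total x y with hxy | hxy
    · have := rpow_le_rpow hx.le hxy (neg_nonneg.mpr hθ.le)
      exact mul_nonneg_of_nonpos_of_nonpos (by linarith) (by linarith)
    · have := rpow_le_rpow hy.le hxy (neg_nonneg.mpr hθ.le)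
      exact mul_nonneg (by linarith) (by linarith)
  · refine mul_nonneg_of_nonpos_of_nonpos hc ?_
    rcases le_total x y with hxy | hxy
    · have := rpow_le_rpow_of_nonpos hx hxy (neg_nonpos.mpr hθ)
      exact mul_nonpos_of_nonneg_of_nonpos (by linarith) (by linarith)
    · have := rpow_le_rpow_of_nonpos hy hxy (neg_nonpos.mpr hθ)
      exact mul_nonpos_of_nonpos_of_nonneg (by linarith) (by linarith)

end Rpow

/-! ### Norm inequalities -/

section Norms

variable {d : ℕ} {Ω : Set (EuclideanSpace ℝ (Fin d))} {f : EuclideanSpace ℝ (Fin d) → ℝ}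

theorem normL1_nonneg (Ω : Set (EuclideanSpace ℝ (Fin d))) (f : EuclideanSpace ℝ (Fin d) → ℝ) :
    0 ≤ normL1 Ω f :=
  integral_nonneg fun _ => abs_nonneg _

theorem normL2_nonneg (Ω : Set (EuclideanSpace ℝ (Fin d))) (f : EuclideanSpace ℝ (Fin d) → ℝ) :
    0 ≤ normL2 Ω f :=
  Real.sqrt_nonneg _

theorem normL2_const_mul (Ω : Set (EuclideanSpace ℝ (Fin d))) (a : ℝ)
    (f : EuclideanSpace ℝ (Fin d) → ℝ) :
    normL2 Ω (fun x => a * f x) = |a| * normL2 Ω f := by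
  simp only [normL2, mul_pow, integral_const_mul]
  rw [Real.sqrt_mul (sq_nonneg a), Real.sqrt_sq_eq_abs]

theorem memLp_two_of_continuousOn_closure (hb : Bornology.IsBounded Ω)
    (hf : ContinuousOn f (closure Ω)) : MemLp f 2 (volume.restrict Ω) :=
  ((memLp_two_iff_integrable_sq (hf.aestronglyMeasurable measurableSet_closure)).mpr
    ((hf.pow 2).integrableOn_compact hb.isCompact_closure)).mono_measure
    (Measure.restrict_mono_set volume subset_closure)

theorem normL1_le_sqrt_volume_mul_normL2 (hΩ : volume Ω ≠ ⊤)
    (hf : MemLp f 2 (volume.restrict Ω)) :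
    normL1 Ω f ≤ √(volume.real Ω) * normL2 Ω f := by
  have : IsFiniteMeasure (volume.restrict Ω) := isFiniteMeasure_restrict.mpr hΩ
  have abs_memLp : MemLp (fun x => |f x|) 2 (volume.restrict Ω) := hf.norm
  have := integral_mul_le_Lp_mul_Lq_of_nonneg (μ := volume.restrict Ω) HolderConjugate.two_two
    (f := fun _ => 1) (g := fun x => |f x|) (.of_forall fun _ => zero_le_one)
    (.of_forall fun x => abs_nonneg (f x)) (by simpa using memLp_const 1)
    (by simpa using abs_memLp)
  simpa [normL1, normL2, Real.sqrt_eq_rpow] using this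

theorem normL2_le_mul_normL2_add_normH1 {h q w : EuclideanSpace ℝ (Fin d) → ℝ} {C : ℝ}
    (hΩ : MeasurableSet Ω) (hC : 0 ≤ C)
    (hq : IntegrableOn (fun x => q x ^ 2) Ω)
    (hw : IntegrableOn (fun x => w x ^ 2 + ‖fderiv ℝ w x‖ ^ 2) Ω)
    (hle : ∀ x ∈ Ω, |h x| ≤ C * (|q x| + |w x| + ‖fderiv ℝ w x‖)) :
    normL2 Ω h ≤ 2 * C * (normL2 Ω q + normH1 Ω w) := by
  have sq_le : ∫ x in Ω, h x ^ 2 ≤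
      3 * C ^ 2 * ∫ x in Ω, (q x ^ 2 + (w x ^ 2 + ‖fderiv ℝ w x‖ ^ 2)) := by
    rw [← integral_const_mul]
    refine integral_mono_of_nonneg (.of_forall fun x => sq_nonneg _)
      ((Integrable.add hq hw).const_mul _) ?_
    filter_upwards [ae_restrict_mem hΩ] with x hx
    calc h x ^ 2 = |h x| ^ 2 := (sq_abs _).symm
      _ ≤ (C * (|q x| + |w x| + ‖fderiv ℝ w x‖)) ^ 2 := by
        gcongr
        exact hle x hx
      _ ≤ 3 * C ^ 2 * (|q x| ^ 2 + (|w x| ^ 2 + ‖fderiv ℝ w x‖ ^ 2)) := by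
        rw [mul_pow, mul_comm 3, mul_assoc]
        gcongr
        nlinarith [sq_nonneg (|q x| - |w x|), sq_nonneg (|q x| - ‖fderiv ℝ w x‖),
          sq_nonneg (|w x| - ‖fderiv ℝ w x‖)]
      _ = 3 * C ^ 2 * (q x ^ 2 + (w x ^ 2 + ‖fderiv ℝ w x‖ ^ 2)) := by simp only [sq_abs]
  have hN : ∫ x in Ω, q x ^ 2 = normL2 Ω q ^ 2 :=
    (Real.sq_sqrt (integral_nonneg fun x => sq_nonneg _)).symm
  have hH : ∫ x in Ω, (w x ^ 2 + ‖fderiv ℝ w x‖ ^ 2) = normH1 Ω w ^ 2 :=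
    (Real.sq_sqrt (integral_nonneg fun x => by positivity)).symm
  rw [integral_add hq hw, hN, hH] at sq_le
  have hN0 := normL2_nonneg Ω q
  have hH0 : 0 ≤ normH1 Ω w := Real.sqrt_nonneg _
  refine Real.sqrt_le_iff.mpr ⟨by positivity, sq_le.trans ?_⟩
  rw [mul_pow, mul_pow]
  nlinarith [mul_nonneg (sq_nonneg C) (mul_nonneg hN0 hH0),
    mul_nonneg (sq_nonneg C) (sq_nonneg (normL2 Ω q)),
    mul_nonneg (sq_nonneg C) (sq_nonneg (normH1 Ω w))]

end Norms

/-! ### Stability of the semilinear equation -/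

section Semilinear

variable {d : ℕ} {Ω : Set (EuclideanSpace ℝ (Fin d))} {D : EuclideanSpace ℝ (Fin d) → ℝ}

theorem neg_abs_mul_abs_le_mul_reaction_sub {b c₁ c₂ x y θ L : ℝ} (hb : 0 ≤ b) (hx : 0 < x)
    (hy : 0 < y) (hL : y ^ (-θ) ≤ L) (hc : θ < 0 ∧ 0 ≤ c₁ ∨ 0 ≤ θ ∧ c₁ ≤ 0) :
    -(|L * (c₁ - c₂)| * |x - y|) ≤
      (x - y) * (b * x + c₁ * x ^ (-θ) - (b * y + c₂ * y ^ (-θ))) := by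
  have monotone_part := mul_rpow_sub_mul_sub_nonneg hx hy hc
  have linear_part : 0 ≤ b * (x - y) ^ 2 := mul_nonneg hb (sq_nonneg _)
  have source_part : |y ^ (-θ) * ((c₁ - c₂) * (x - y))| ≤ |L * (c₁ - c₂)| * |x - y| := by
    rw [abs_mul, abs_mul, abs_mul, mul_assoc]
    gcongr
  have := (abs_le.mp source_part).1
  linarith

theorem exists_normH1_sub_le [NeZero d] (hΩ : IsOpen Ω) (hb : Bornology.IsBounded Ω) {a₀ : ℝ}
    (ha₀ : 0 < a₀) (hD : ContDiffOn ℝ 1 D Ω) (hDa : ∀ x ∈ Ω, a₀ ≤ D x) {m : ℝ} (hm : 0 < m)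
    (L θ : ℝ) :
    ∃ K > 0, ∀ b c₁ c₂ Ψ₁ Ψ₂ : EuclideanSpace ℝ (Fin d) → ℝ, (∀ x ∈ Ω, 0 ≤ b x) →
      ((θ < 0 ∧ ∀ x ∈ Ω, 0 ≤ c₁ x) ∨ (0 ≤ θ ∧ ∀ x ∈ Ω, c₁ x ≤ 0)) →
      ContDiffOn ℝ 2 Ψ₁ Ω → ContDiffOn ℝ 2 Ψ₂ Ω →
      ContinuousOn Ψ₁ (closure Ω) → ContinuousOn Ψ₂ (closure Ω) →
      (∀ x ∈ Ω, Ψ₁ x ∈ Icc m L) → (∀ x ∈ Ω, Ψ₂ x ∈ Icc m L) →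
      (∀ x ∈ Ω, divA D Ψ₁ x = b x * Ψ₁ x + c₁ x * Ψ₁ x ^ (-θ)) →
      (∀ x ∈ Ω, divA D Ψ₂ x = b x * Ψ₂ x + c₂ x * Ψ₂ x ^ (-θ)) →
      (∀ x ∈ frontier Ω, Ψ₁ x = Ψ₂ x) →
      IntegrableOn (fun x => ‖fderiv ℝ (Ψ₁ - Ψ₂) x‖ ^ 2) Ω →
      IntegrableOn (fun x => (c₁ x - c₂ x) ^ 2) Ω →
      normH1 Ω (Ψ₁ - Ψ₂) ≤ K * normL2 Ω (fun x => c₁ x - c₂ x) := by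
  obtain ⟨R, hRpos, hR⟩ := hb.exists_pos_norm_le
  obtain ⟨B, hBpos, hB⟩ := exists_rpow_le hm L (-θ)
  refine ⟨√((2 * R) ^ 2 + 1) * (2 * R / a₀) * B, by positivity, ?_⟩
  intro b c₁ c₂ Ψ₁ Ψ₂ hb₀ hc hΨ₁ hΨ₂ hcont₁ hcont₂ hmem₁ hmem₂ heq₁ heq₂ hfr hgrad hsource
  have energy := normH1_le_mul_normL2 (f := fun x => B * (c₁ x - c₂ x)) (w := Ψ₁ - Ψ₂) hΩ hb
    (0 : Fin d) hRpos (fun x hx => (PiLp.norm_apply_le x 0).trans (hR x hx)) ha₀ hD hDa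
    (hΨ₁.sub hΨ₂) (hcont₁.sub hcont₂) (fun x hx => sub_eq_zero.mpr (hfr x hx)) hgrad
    (by simp only [mul_pow]; exact hsource.const_mul (B ^ 2)) fun x hx => by
      have hΩx := hΩ.mem_nhds hx
      rw [divA_sub (hD.contDiffAt hΩx) (hΨ₁.contDiffAt hΩx) (hΨ₂.contDiffAt hΩx), heq₁ x hx,
        heq₂ x hx]
      exact neg_abs_mul_abs_le_mul_reaction_sub (hb₀ x hx) (hm.trans_le (hmem₁ x hx).1)
        (hm.trans_le (hmem₂ x hx).1) (hB _ (hmem₂ x hx))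
        (hc.imp (And.imp_right fun h => h x hx) (And.imp_right fun h => h x hx))
  rwa [normL2_const_mul, abs_of_pos hBpos, ← mul_assoc] at energy

end Semilinear

/-! ### Reconstruction of the fluorophore absorption -/

/-- The internal datum `Q = γ D |∇u|² + (βₓ σ + β_f σ_f) u²` of fluorescence imaging; `f` is the
fluorophore absorption coefficient `σ_f`. -/
noncomputable def internalDatum {d : ℕ} (γ βx βf : ℝ) (D σ f u : EuclideanSpace ℝ (Fin d) → ℝ)
    (x : EuclideanSpace ℝ (Fin d)) : ℝ :=
  γ * D x * gradSq u x + (βx * σ x + βf * f x) * (u x) ^ 2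

/-- `f` is an absorption coefficient and `u` a classical solution of `-∇·(D∇u) + (σ + f) u = 0`
obeying the a priori bounds `K₁₀ ≤ u ≤ K₉`, `|∇u| ≤ M` and `|Q| ≤ Qbar` under which `f` is
recovered from `Q`. -/
structure IsAdmissible {d : ℕ} (Ω : Set (EuclideanSpace ℝ (Fin d)))
    (D σ : EuclideanSpace ℝ (Fin d) → ℝ) (γ βx βf K₁₀ K₉ M Qbar : ℝ)
    (f u : EuclideanSpace ℝ (Fin d) → ℝ) : Prop where
  continuousOn_coeff : ContinuousOn f (closure Ω)
  contDiffOn : ContDiffOn ℝ 2 u Ω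
  continuousOn : ContinuousOn u (closure Ω)
  neg_divA_add_eq_zero : ∀ x ∈ Ω, -divA D u x + (σ x + f x) * u x = 0
  mem_Icc : ∀ x ∈ closure Ω, u x ∈ Icc K₁₀ K₉
  norm_fderiv_le : ∀ x ∈ Ω, ‖fderiv ℝ u x‖ ≤ M
  abs_internalDatum_le : ∀ x ∈ Ω, |internalDatum γ βx βf D σ f u x| ≤ Qbar

section Reconstruction

variable {d : ℕ} {D σ f u : EuclideanSpace ℝ (Fin d) → ℝ} {x : EuclideanSpace ℝ (Fin d)}
  {γ βx βf p θ : ℝ}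

theorem norm_fderiv_rpow (p : ℝ) (hu : DifferentiableAt ℝ u x) (hux : 0 < u x) :
    ‖fderiv ℝ (fun y => u y ^ p) x‖ = |p| * u x ^ (p - 1) * ‖fderiv ℝ u x‖ := by
  rw [(hu.hasFDerivAt.rpow_const (.inl hux.ne')).fderiv, norm_smul, norm_mul, norm_eq_abs,
    norm_of_nonneg (rpow_nonneg hux.le _)]

theorem divA_rpow_eq_add_internalDatum (hD : ContDiffAt ℝ 1 D x) (hu : ContDiffAt ℝ 2 u x)
    (hux : 0 < u x) (hβf : βf ≠ 0) (hγ : γ = (p - 1) * βf) (hp : p * (1 + θ) = 2)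
    (hdiv : divA D u x = (σ x + f x) * u x) :
    divA D (fun y => u y ^ p) x = -p * σ x * (βx / βf - 1) * u x ^ p +
      p / βf * internalDatum γ βx βf D σ f u x * (u x ^ p) ^ (-θ) := by
  have exponent : (u x ^ p) ^ (-θ) = u x ^ (p - 2) := by
    rw [← rpow_mul hux.le]
    congr 1
    linarith
  have rpow_sub_one_mul : u x ^ (p - 1) * u x = u x ^ p := by
    rw [rpow_sub_one hux.ne', div_mul_cancel₀ _ hux.ne']
  have rpow_sub_two_mul : u x ^ (p - 2) * u x ^ 2 = u x ^ p := by
    rw [← rpow_natCast, ← rpow_add hux]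
    norm_num
  rw [divA_rpow p hD hu hux, exponent, hdiv, internalDatum, hγ]
  field_simp
  linear_combination p * βf * (σ x + f x) * rpow_sub_one_mul -
    p * (βx * σ x + βf * f x) * rpow_sub_two_mul

theorem mul_coeff_eq_sub_sub (hu : DifferentiableAt ℝ u x) (hux : 0 < u x) (hp : p ≠ 0) :
    βf * f x = internalDatum γ βx βf D σ f u x * (u x ^ p) ^ (-2 / p) -
      γ / p ^ 2 * D x * (‖fderiv ℝ (fun y => u y ^ p) x‖ ^ 2 * (u x ^ p) ^ (-2 : ℝ)) -
      βx * σ x := by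
  have rpow_neg_two : u x ^ (-2 : ℝ) = (u x ^ 2)⁻¹ := by
    rw [rpow_neg hux.le, rpow_two]
  have datum_exponent : (u x ^ p) ^ (-2 / p) = (u x ^ 2)⁻¹ := by
    rw [← rpow_mul hux.le, mul_div_cancel₀ _ hp, rpow_neg_two]
  have gradient_exponent : (u x ^ (p - 1)) ^ 2 * (u x ^ p) ^ (-2 : ℝ) = (u x ^ 2)⁻¹ := by
    rw [rpow_neg (rpow_nonneg hux.le p), rpow_two, ← div_eq_mul_inv, ← div_pow,
      ← rpow_sub hux, sub_sub_cancel_left, rpow_neg_one, inv_pow]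
  have gradient_term : ‖fderiv ℝ (fun y => u y ^ p) x‖ ^ 2 * (u x ^ p) ^ (-2 : ℝ) =
      p ^ 2 * ‖fderiv ℝ u x‖ ^ 2 * (u x ^ 2)⁻¹ := by
    rw [norm_fderiv_rpow p hu hux, ← gradient_exponent, mul_pow, mul_pow, sq_abs]
    ring
  rw [datum_exponent, gradient_term, internalDatum, gradSq_eq_norm_fderiv_sq]
  field_simp
  ring

theorem exists_abs_reconstruction_sub_le {E : Type*} [SeminormedAddCommGroup E] {m : ℝ}
    (hm : 0 < m) (L r B G k : ℝ) :
    ∃ C > 0, ∀ s ∈ Icc m L, ∀ t ∈ Icc m L, ∀ a b D : ℝ, ∀ g h : E, |b| ≤ B → |D| ≤ k →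
      ‖g‖ ≤ G → ‖h‖ ≤ G →
      |a * s ^ r - b * t ^ r - D * (‖g‖ ^ 2 * s ^ (-2 : ℝ) - ‖h‖ ^ 2 * t ^ (-2 : ℝ))| ≤
        C * (|a - b| + |s - t| + ‖g - h‖) := by
  obtain ⟨C₁, hC₁pos, hC₁⟩ := exists_abs_mul_rpow_sub_le hm L B r
  obtain ⟨C₂, hC₂pos, hC₂⟩ := exists_abs_mul_rpow_sub_le hm L (G ^ 2) (-2)
  refine ⟨C₁ + |k| * C₂ * (1 + 2 * |G|), by positivity, ?_⟩
  intro s hs t ht a b D g h hb hD hg hh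
  have sq_sub_le : |‖g‖ ^ 2 - ‖h‖ ^ 2| ≤ 2 * |G| * ‖g - h‖ := by
    rw [sq_sub_sq, abs_mul, abs_of_nonneg (by positivity)]
    gcongr
    · linarith [le_abs_self G]
    · exact abs_norm_sub_norm_le g h
  have gradient_term : |‖g‖ ^ 2 * s ^ (-2 : ℝ) - ‖h‖ ^ 2 * t ^ (-2 : ℝ)| ≤
      C₂ * (2 * |G| * ‖g - h‖ + |s - t|) :=
    (hC₂ s hs t ht _ _ (by rw [abs_of_nonneg (by positivity)]; gcongr)).trans (by gcongr)
  have hDk : |D| ≤ |k| := hD.trans (le_abs_self k)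
  calc _ ≤ |a * s ^ r - b * t ^ r| +
        |D| * |‖g‖ ^ 2 * s ^ (-2 : ℝ) - ‖h‖ ^ 2 * t ^ (-2 : ℝ)| :=
        (abs_sub _ _).trans_eq (by rw [abs_mul])
    _ ≤ C₁ * (|a - b| + |s - t|) + |k| * (C₂ * (2 * |G| * ‖g - h‖ + |s - t|)) := by
      gcongr
      exact hC₁ s hs t ht a b hb
    _ ≤ (C₁ + |k| * C₂ * (1 + 2 * |G|)) * (|a - b| + |s - t| + ‖g - h‖) := by
      have := mul_nonneg hC₁pos.le (norm_nonneg (g - h))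
      have kC₂ : 0 ≤ |k| * C₂ := by positivity
      have := mul_nonneg kC₂ (abs_nonneg (a - b))
      have := mul_nonneg kC₂ (norm_nonneg (g - h))
      have kC₂G : 0 ≤ |k| * C₂ * |G| := by positivity
      have := mul_nonneg kC₂G (abs_nonneg (a - b))
      have := mul_nonneg kC₂G (abs_nonneg (s - t))
      linarith

end Reconstruction

/-! ### Stability of the reconstruction -/

section Stability

variable {d : ℕ} {Ω : Set (EuclideanSpace ℝ (Fin d))} {D σ f u : EuclideanSpace ℝ (Fin d) → ℝ}
  {γ βx βf K₁₀ K₉ M Qbar θ a₀ A : ℝ}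

namespace IsAdmissible

theorem pos (h : IsAdmissible Ω D σ γ βx βf K₁₀ K₉ M Qbar f u) (hK₁₀ : 0 < K₁₀) :
    ∀ x ∈ closure Ω, 0 < u x :=
  fun x hx => hK₁₀.trans_le (h.mem_Icc x hx).1

theorem contDiffAt (h : IsAdmissible Ω D σ γ βx βf K₁₀ K₉ M Qbar f u) (hΩ : IsOpen Ω) :
    ∀ x ∈ Ω, ContDiffAt ℝ 2 u x :=
  fun _ hx => h.contDiffOn.contDiffAt (hΩ.mem_nhds hx)

theorem contDiffOn_rpow (h : IsAdmissible Ω D σ γ βx βf K₁₀ K₉ M Qbar f u) (hK₁₀ : 0 < K₁₀)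
    (p : ℝ) : ContDiffOn ℝ 2 (fun y => u y ^ p) Ω :=
  h.contDiffOn.rpow_const_of_ne fun x hx => (h.pos hK₁₀ x (subset_closure hx)).ne'

theorem continuousOn_rpow (h : IsAdmissible Ω D σ γ βx βf K₁₀ K₉ M Qbar f u) (hK₁₀ : 0 < K₁₀)
    (p : ℝ) : ContinuousOn (fun y => u y ^ p) (closure Ω) :=
  h.continuousOn.rpow_const fun x hx => .inl (h.pos hK₁₀ x hx).ne'

theorem memLp_internalDatum (h : IsAdmissible Ω D σ γ βx βf K₁₀ K₉ M Qbar f u) (hΩ : IsOpen Ω)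
    (hb : Bornology.IsBounded Ω) (hD : ContinuousOn D Ω) (hσ : ContinuousOn σ Ω) :
    MemLp (internalDatum γ βx βf D σ f u) 2 (volume.restrict Ω) := by
  have : IsFiniteMeasure (volume.restrict Ω) := isFiniteMeasure_restrict.mpr hb.measure_lt_top.ne
  have grad_cont : ContinuousOn (gradSq u) Ω := by
    simpa only [← gradSq_eq_norm_fderiv_sq] using
      continuousOn_norm_fderiv_sq hΩ (h.contDiffOn.of_le one_le_two)
  have datum_cont : ContinuousOn (internalDatum γ βx βf D σ f u) Ω :=
    ((continuousOn_const.mul hD).mul grad_cont).add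
      (((continuousOn_const.mul hσ).add (continuousOn_const.mul
        (h.continuousOn_coeff.mono subset_closure))).mul (h.contDiffOn.continuousOn.pow 2))
  exact .of_bound (datum_cont.aestronglyMeasurable hΩ.measurableSet) Qbar
    ((ae_restrict_mem hΩ.measurableSet).mono h.abs_internalDatum_le)

end IsAdmissible

theorem exists_norm_fderiv_rpow_le (hΩ : IsOpen Ω) (hK₁₀ : 0 < K₁₀)
    (D σ : EuclideanSpace ℝ (Fin d) → ℝ) (γ βx βf K₉ M Qbar p : ℝ) :
    ∃ G, ∀ f u, IsAdmissible Ω D σ γ βx βf K₁₀ K₉ M Qbar f u →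
      ∀ x ∈ Ω, ‖fderiv ℝ (fun y => u y ^ p) x‖ ≤ G := by
  obtain ⟨B, hBpos, hB⟩ := exists_rpow_le hK₁₀ K₉ (p - 1)
  refine ⟨|p| * B * M, fun f u h x hx => ?_⟩
  rw [norm_fderiv_rpow p ((h.contDiffAt hΩ x hx).differentiableAt two_ne_zero)
    (h.pos hK₁₀ x (subset_closure hx))]
  gcongr
  · exact hB _ (h.mem_Icc x (subset_closure hx))
  · exact h.norm_fderiv_le x hx

theorem IsAdmissible.integrableOn_norm_fderiv_rpow_sub_sq {f₁ f₂ u₁ u₂}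
    (h₁ : IsAdmissible Ω D σ γ βx βf K₁₀ K₉ M Qbar f₁ u₁)
    (h₂ : IsAdmissible Ω D σ γ βx βf K₁₀ K₉ M Qbar f₂ u₂) (hΩ : IsOpen Ω)
    (hb : Bornology.IsBounded Ω) (hK₁₀ : 0 < K₁₀) (p : ℝ) :
    IntegrableOn (fun x => ‖fderiv ℝ (fun y => u₁ y ^ p - u₂ y ^ p) x‖ ^ 2) Ω := by
  obtain ⟨G, hG⟩ := exists_norm_fderiv_rpow_le hΩ hK₁₀ D σ γ βx βf K₉ M Qbar p
  have hΨ₁ := h₁.contDiffOn_rpow hK₁₀ p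
  have hΨ₂ := h₂.contDiffOn_rpow hK₁₀ p
  have grad_le : ∀ x ∈ Ω, ‖‖fderiv ℝ (fun y => u₁ y ^ p - u₂ y ^ p) x‖ ^ 2‖ ≤ (G + G) ^ 2 := by
    intro x hx
    rw [fderiv_fun_sub ((hΨ₁.contDiffAt (hΩ.mem_nhds hx)).differentiableAt two_ne_zero)
      ((hΨ₂.contDiffAt (hΩ.mem_nhds hx)).differentiableAt two_ne_zero), norm_pow, norm_norm]
    gcongr
    exact norm_sub_le_of_le (hG _ _ h₁ x hx) (hG _ _ h₂ x hx)
  exact IntegrableOn.of_bound hb.measure_lt_top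
    ((continuousOn_norm_fderiv_sq hΩ ((hΨ₁.sub hΨ₂).of_le one_le_two)).aestronglyMeasurable
      hΩ.measurableSet) _ ((ae_restrict_mem hΩ.measurableSet).mono grad_le)

theorem exists_abs_coeff_sub_le (hΩ : IsOpen Ω) (hK₁₀ : 0 < K₁₀) (hD : ∀ x ∈ Ω, |D x| ≤ A)
    (hβf : βf ≠ 0) {p : ℝ} (hp : p ≠ 0) (σ : EuclideanSpace ℝ (Fin d) → ℝ)
    (γ βx K₉ M Qbar : ℝ) :
    ∃ C > 0, ∀ f₁ f₂ u₁ u₂, IsAdmissible Ω D σ γ βx βf K₁₀ K₉ M Qbar f₁ u₁ →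
      IsAdmissible Ω D σ γ βx βf K₁₀ K₉ M Qbar f₂ u₂ → ∀ x ∈ Ω, |f₁ x - f₂ x| ≤
        C * (|internalDatum γ βx βf D σ f₁ u₁ x - internalDatum γ βx βf D σ f₂ u₂ x| +
          |u₁ x ^ p - u₂ x ^ p| + ‖fderiv ℝ (fun y => u₁ y ^ p - u₂ y ^ p) x‖) := by
  obtain ⟨G, hG⟩ := exists_norm_fderiv_rpow_le hΩ hK₁₀ D σ γ βx βf K₉ M Qbar p
  obtain ⟨m, hm, L, hmL⟩ := exists_rpow_mem_Icc hK₁₀ K₉ p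
  obtain ⟨C, hC, hrec⟩ := exists_abs_reconstruction_sub_le
    (E := StrongDual ℝ (EuclideanSpace ℝ (Fin d))) hm L (-2 / p) Qbar G (|γ / p ^ 2| * A)
  refine ⟨|βf|⁻¹ * C, by positivity, fun f₁ f₂ u₁ u₂ h₁ h₂ x hx => ?_⟩
  have hx' := subset_closure hx
  have diff₁ := (h₁.contDiffAt hΩ x hx).differentiableAt two_ne_zero
  have diff₂ := (h₂.contDiffAt hΩ x hx).differentiableAt two_ne_zero
  have stable := hrec _ (hmL _ (h₁.mem_Icc x hx')) _ (hmL _ (h₂.mem_Icc x hx'))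
    (internalDatum γ βx βf D σ f₁ u₁ x) _ (γ / p ^ 2 * D x) _ _ (h₂.abs_internalDatum_le x hx)
    (by rw [abs_mul]; gcongr; exact hD x hx) (hG _ _ h₁ x hx) (hG _ _ h₂ x hx)
  have formula₁ := mul_coeff_eq_sub_sub (D := D) (σ := σ) (f := f₁) (γ := γ) (βx := βx)
    (βf := βf) diff₁ (h₁.pos hK₁₀ x hx') hp
  have formula₂ := mul_coeff_eq_sub_sub (D := D) (σ := σ) (f := f₂) (γ := γ) (βx := βx)
    (βf := βf) diff₂ (h₂.pos hK₁₀ x hx') hp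
  rw [fderiv_fun_sub (diff₁.rpow_const (.inl (h₁.pos hK₁₀ x hx').ne'))
    (diff₂.rpow_const (.inl (h₂.pos hK₁₀ x hx').ne')), mul_assoc, ← div_eq_inv_mul,
    le_div_iff₀' (abs_pos.mpr hβf), ← abs_mul, mul_sub, formula₁, formula₂]
  refine Eq.trans_le ?_ stable
  congr 1
  ring

theorem exists_normH1_rpow_sub_le [NeZero d] (hΩ : IsOpen Ω) (hb : Bornology.IsBounded Ω)
    (ha₀ : 0 < a₀) (hD : ContDiffOn ℝ 1 D Ω) (hDa : ∀ x ∈ Ω, a₀ ≤ D x) (hσ : ContinuousOn σ Ω)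
    (hK₁₀ : 0 < K₁₀) (hβf : βf ≠ 0) {p : ℝ} (hγ : γ = (p - 1) * βf) (hp : p * (1 + θ) = 2)
    (hb₀ : ∀ x ∈ Ω, 0 ≤ -p * σ x * (βx / βf - 1)) (K₉ M Qbar : ℝ) :
    ∃ K > 0, ∀ f₁ f₂ u₁ u₂, IsAdmissible Ω D σ γ βx βf K₁₀ K₉ M Qbar f₁ u₁ →
      IsAdmissible Ω D σ γ βx βf K₁₀ K₉ M Qbar f₂ u₂ → (∀ x ∈ frontier Ω, u₁ x = u₂ x) →
      ((θ < 0 ∧ ∀ x ∈ Ω, 0 ≤ p / βf * internalDatum γ βx βf D σ f₁ u₁ x) ∨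
        (0 ≤ θ ∧ ∀ x ∈ Ω, p / βf * internalDatum γ βx βf D σ f₁ u₁ x ≤ 0)) →
      normH1 Ω (fun x => u₁ x ^ p - u₂ x ^ p) ≤ K * normL2 Ω
        fun x => internalDatum γ βx βf D σ f₁ u₁ x - internalDatum γ βx βf D σ f₂ u₂ x := by
  obtain ⟨m, hm, L, hmL⟩ := exists_rpow_mem_Icc hK₁₀ K₉ p
  obtain ⟨K, hK, stable⟩ := exists_normH1_sub_le hΩ hb ha₀ hD hDa hm L θ
  have hp₀ : p ≠ 0 := left_ne_zero_of_mul (hp.trans_ne two_ne_zero)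
  refine ⟨K * |p / βf|, by positivity, fun f₁ f₂ u₁ u₂ h₁ h₂ hfr hsign => ?_⟩
  have source_int : IntegrableOn (fun x => (p / βf * internalDatum γ βx βf D σ f₁ u₁ x -
      p / βf * internalDatum γ βx βf D σ f₂ u₂ x) ^ 2) Ω :=
    (((h₁.memLp_internalDatum hΩ hb hD.continuousOn hσ).const_mul (p / βf)).sub
      ((h₂.memLp_internalDatum hΩ hb hD.continuousOn hσ).const_mul (p / βf))).integrable_sq
  have semilinear {f u} (h : IsAdmissible Ω D σ γ βx βf K₁₀ K₉ M Qbar f u) (x) (hx : x ∈ Ω) :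
      divA D (fun y => u y ^ p) x = -p * σ x * (βx / βf - 1) * u x ^ p +
        p / βf * internalDatum γ βx βf D σ f u x * (u x ^ p) ^ (-θ) :=
    divA_rpow_eq_add_internalDatum (hD.contDiffAt (hΩ.mem_nhds hx)) (h.contDiffAt hΩ x hx)
      (h.pos hK₁₀ x (subset_closure hx)) hβf hγ hp
      (by linarith [h.neg_divA_add_eq_zero x hx])
  have := stable _ _ _ _ _ hb₀ hsign (h₁.contDiffOn_rpow hK₁₀ p) (h₂.contDiffOn_rpow hK₁₀ p)
    (h₁.continuousOn_rpow hK₁₀ p) (h₂.continuousOn_rpow hK₁₀ p)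
    (fun x hx => hmL _ (h₁.mem_Icc x (subset_closure hx)))
    (fun x hx => hmL _ (h₂.mem_Icc x (subset_closure hx))) (semilinear h₁) (semilinear h₂)
    (fun x hx => by simp only [hfr x hx])
    (h₁.integrableOn_norm_fderiv_rpow_sub_sq h₂ hΩ hb hK₁₀ p) source_int
  simp only [← mul_sub] at this
  rwa [normL2_const_mul, ← mul_assoc] at this

theorem stmt14_general [NeZero d] (hΩ : IsOpen Ω) (hb : Bornology.IsBounded Ω)
    (hD : ContDiffOn ℝ 1 D Ω) (ha₀ : 0 < a₀) (hDa : ∀ x ∈ Ω, a₀ ≤ D x) (hDA : ∀ x ∈ Ω, D x ≤ A)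
    (hσ : ContinuousOn σ Ω) (hβf : βf ≠ 0) (hsum : βf + γ ≠ 0)
    (hθ : θ = (βf - γ) / (βf + γ)) (hb₀ : ∀ x ∈ Ω, 0 ≤ -(2 / (1 + θ)) * σ x * (βx / βf - 1))
    (hK₁₀ : 0 < K₁₀) (K₉ M Qbar : ℝ) :
    ∃ K > 0, ∀ f₁ f₂ u₁ u₂, IsAdmissible Ω D σ γ βx βf K₁₀ K₉ M Qbar f₁ u₁ →
      IsAdmissible Ω D σ γ βx βf K₁₀ K₉ M Qbar f₂ u₂ → (∀ x ∈ frontier Ω, u₁ x = u₂ x) →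
      ((θ < 0 ∧ ∀ x ∈ Ω, 0 ≤ 2 / ((1 + θ) * βf) * internalDatum γ βx βf D σ f₁ u₁ x) ∨
        (0 ≤ θ ∧ ∀ x ∈ Ω, 2 / ((1 + θ) * βf) * internalDatum γ βx βf D σ f₁ u₁ x ≤ 0)) →
      normL2 Ω (fun x => f₁ x - f₂ x) ≤ K * normL2 Ω
        fun x => internalDatum γ βx βf D σ f₁ u₁ x - internalDatum γ βx βf D σ f₂ u₂ x := by
  have one_add_θ : 1 + θ = 2 * βf / (βf + γ) := by
    rw [hθ]
    field_simp
    ring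
  have one_add_θ_ne : 1 + θ ≠ 0 := by rw [one_add_θ]; positivity
  have hγ : γ = (2 / (1 + θ) - 1) * βf := by
    rw [one_add_θ]
    field_simp
    ring
  obtain ⟨C, hC, reconstruction⟩ := exists_abs_coeff_sub_le hΩ hK₁₀
    (fun x hx => (abs_of_pos (ha₀.trans_le (hDa x hx))).trans_le (hDA x hx)) hβf
    (div_ne_zero two_ne_zero one_add_θ_ne) σ γ βx K₉ M Qbar
  obtain ⟨K, hK, stable⟩ := exists_normH1_rpow_sub_le hΩ hb ha₀ hD hDa hσ hK₁₀ hβf hγ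
    (div_mul_cancel₀ 2 one_add_θ_ne) hb₀ K₉ M Qbar
  refine ⟨2 * C * (1 + K), by positivity, fun f₁ f₂ u₁ u₂ h₁ h₂ hfr hsign => ?_⟩
  have datum_int : IntegrableOn (fun x => (internalDatum γ βx βf D σ f₁ u₁ x -
      internalDatum γ βx βf D σ f₂ u₂ x) ^ 2) Ω :=
    ((h₁.memLp_internalDatum hΩ hb hD.continuousOn hσ).sub
      (h₂.memLp_internalDatum hΩ hb hD.continuousOn hσ)).integrable_sq
  have sq_int : IntegrableOn (fun x => (u₁ x ^ (2 / (1 + θ)) - u₂ x ^ (2 / (1 + θ))) ^ 2) Ω :=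
    (memLp_two_of_continuousOn_closure hb
      ((h₁.continuousOn_rpow hK₁₀ _).sub (h₂.continuousOn_rpow hK₁₀ _))).integrable_sq
  have grad_int := h₁.integrableOn_norm_fderiv_rpow_sub_sq h₂ hΩ hb hK₁₀ (2 / (1 + θ))
  have split := normL2_le_mul_normL2_add_normH1 hΩ.measurableSet hC.le datum_int
    (Integrable.add sq_int grad_int) (reconstruction f₁ f₂ u₁ u₂ h₁ h₂)
  calc _ ≤ _ := split
    _ ≤ 2 * C * (_ + K * _) := by
      gcongr
      exact stable f₁ f₂ u₁ u₂ h₁ h₂ hfr (by rwa [div_div])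
    _ = _ := by ring

end Stability

theorem stmt14 {d : ℕ} (hd : 1 ≤ d) (Ω U : Set (EuclideanSpace ℝ (Fin d)))
    (hΩo : IsOpen Ω) (hΩb : Bornology.IsBounded Ω)
    (hU : IsOpen U) (hUΩ : closure Ω ⊆ U)
    (Dx σxa : EuclideanSpace ℝ (Fin d) → ℝ)
    (hDx : ContDiffOn ℝ 1 Dx U)
    (a₀ A₁ A₂ Sbar : ℝ) (ha₀ : 0 < a₀) (haA : a₀ ≤ A₁) (hA₂ : 0 ≤ A₂)
    (hDlb : ∀ x ∈ closure Ω, a₀ ≤ Dx x) (hDub : ∀ x ∈ closure Ω, Dx x ≤ A₁)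
    (hDgrad : ∀ x ∈ closure Ω, ‖fderiv ℝ Dx x‖ ≤ A₂)
    (hσcont : ContinuousOn σxa (closure Ω))
    (hσlb : ∀ x ∈ closure Ω, 0 ≤ σxa x) (hσub : ∀ x ∈ closure Ω, σxa x ≤ Sbar)
    (γx βx βf : ℝ) (hβf : βf ≠ 0) (hsum : βf + γx ≠ 0)
    (θ μ : ℝ) (hθ : θ = (βf - γx) / (βf + γx)) (hμ : μ = βx / βf - 1)
    (hbnn : ∀ x ∈ Ω, 0 ≤ -(2 / (1 + θ)) * σxa x * μ)
    (K₉ K₁₀ M Qbar : ℝ) (hK₁₀ : 0 < K₁₀) (hK : K₁₀ < K₉) (hM : 0 < M)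
    (hQbar : 0 < Qbar) :
    ∃ K₁₄ : ℝ, 0 < K₁₄ ∧
      ∀ σf₁ σf₂ u₁ u₂ Q₁ Q₂ c₁ c₂ : EuclideanSpace ℝ (Fin d) → ℝ,
        ContinuousOn σf₁ (closure Ω) → ContinuousOn σf₂ (closure Ω) →
        ContDiffOn ℝ 2 u₁ Ω → ContDiffOn ℝ 1 u₁ (closure Ω) →
        ContDiffOn ℝ 2 u₂ Ω → ContDiffOn ℝ 1 u₂ (closure Ω) →
        (∀ x ∈ Ω, -divA Dx u₁ x + (σxa x + σf₁ x) * u₁ x = 0) →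
        (∀ x ∈ Ω, -divA Dx u₂ x + (σxa x + σf₂ x) * u₂ x = 0) →
        (∀ x ∈ frontier Ω, u₁ x = u₂ x) →
        (∀ x ∈ closure Ω, K₁₀ ≤ u₁ x ∧ u₁ x ≤ K₉ ∧ ‖fderiv ℝ u₁ x‖ ≤ M) →
        (∀ x ∈ closure Ω, K₁₀ ≤ u₂ x ∧ u₂ x ≤ K₉ ∧ ‖fderiv ℝ u₂ x‖ ≤ M) →
        (∀ x, Q₁ x = γx * Dx x * gradSq u₁ x
            + (βx * σxa x + βf * σf₁ x) * (u₁ x) ^ 2) →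
        (∀ x, Q₂ x = γx * Dx x * gradSq u₂ x
            + (βx * σxa x + βf * σf₂ x) * (u₂ x) ^ 2) →
        (∀ x, c₁ x = (2 / ((1 + θ) * βf)) * Q₁ x) →
        (∀ x, c₂ x = (2 / ((1 + θ) * βf)) * Q₂ x) →
        (∀ x ∈ closure Ω, |Q₁ x| ≤ Qbar) → (∀ x ∈ closure Ω, |Q₂ x| ≤ Qbar) →
        ((θ < 0 ∧ θ ≠ -1 ∧ (∀ x ∈ Ω, 0 ≤ c₁ x) ∧ (∀ x ∈ Ω, 0 ≤ c₂ x)) ∨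
          (0 ≤ θ ∧ (∀ x ∈ Ω, c₁ x ≤ 0) ∧ (∀ x ∈ Ω, c₂ x ≤ 0))) →
        normL1 Ω (fun x => σf₁ x - σf₂ x)
          ≤ K₁₄ * (normL1 Ω (fun x => Q₁ x - Q₂ x)
              + normL2 Ω (fun x => Q₁ x - Q₂ x)
              + (normL2 Ω (fun x => Q₁ x - Q₂ x)) ^ 2) := by
  have : NeZero d := ⟨by lia⟩
  subst hμ
  have hΩU := subset_closure.trans hUΩ
  obtain ⟨K, hK, stable⟩ := stmt14_general hΩo hΩb (hDx.mono hΩU) ha₀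
    (fun x hx => hDlb x (subset_closure hx)) (fun x hx => hDub x (subset_closure hx))
    (hσcont.mono subset_closure) hβf hsum hθ hbnn hK₁₀ K₉ M Qbar
  refine ⟨√(volume.real Ω) * K + 1, by positivity, ?_⟩
  intro σf₁ σf₂ u₁ u₂ Q₁ Q₂ c₁ c₂ hσ₁ hσ₂ hu₁ hu₁' hu₂ hu₂' hpde₁ hpde₂ hfr hb₁ hb₂ hQ₁ hQ₂
    hc₁ hc₂ hQb₁ hQb₂ hsign
  obtain rfl : Q₁ = internalDatum γx βx βf Dx σxa σf₁ u₁ := funext hQ₁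
  obtain rfl : Q₂ = internalDatum γx βx βf Dx σxa σf₂ u₂ := funext hQ₂
  obtain rfl := funext hc₁
  have h₁ : IsAdmissible Ω Dx σxa γx βx βf K₁₀ K₉ M Qbar σf₁ u₁ := ⟨hσ₁, hu₁, hu₁'.continuousOn,
    hpde₁, fun x hx => ⟨(hb₁ x hx).1, (hb₁ x hx).2.1⟩,
    fun x hx => (hb₁ x (subset_closure hx)).2.2, fun x hx => hQb₁ x (subset_closure hx)⟩
  have h₂ : IsAdmissible Ω Dx σxa γx βx βf K₁₀ K₉ M Qbar σf₂ u₂ := ⟨hσ₂, hu₂, hu₂'.continuousOn,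
    hpde₂, fun x hx => ⟨(hb₂ x hx).1, (hb₂ x hx).2.1⟩,
    fun x hx => (hb₂ x (subset_closure hx)).2.2, fun x hx => hQb₂ x (subset_closure hx)⟩
  have l2_le := stable σf₁ σf₂ u₁ u₂ h₁ h₂ hfr
    (hsign.imp (fun s => ⟨s.1, s.2.2.1⟩) fun s => ⟨s.1, s.2.1⟩)
  have l1_le := normL1_le_sqrt_volume_mul_normL2 hΩb.measure_lt_top.ne
    (memLp_two_of_continuousOn_closure hΩb (hσ₁.sub hσ₂))
  refine (l1_le.trans (mul_le_mul_of_nonneg_left l2_le (Real.sqrt_nonneg _))).trans ?_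
  rw [← mul_assoc]
  gcongr
  · exact normL2_nonneg _ _
  · exact le_add_of_nonneg_right zero_le_one
  · exact le_add_of_le_of_nonneg (le_add_of_nonneg_left (normL1_nonneg _ _)) (sq_nonneg _)
end

section
/- Assume θ ≥ 0, b ≥ 0 and c ≤ 0 on Ω. Let h be a boundary datum with h > 0 on ∂Ω, and let κ > 0 and ν := -θκ^{-(1+θ)}. Let Ψ ∈ C²(Ω) ∩ C¹(cl(Ω)) be a classical solution of ∇·(a∇Ψ) = bΨ + cΨ^{-θ} in Ω with Ψ = h on ∂Ω and Ψ ≥ κ on cl(Ω). Let Ψ₀ ∈ C²(Ω) ∩ C¹(cl(Ω)) satisfy -∇·(a∇Ψ₀) + bΨ₀ = 0 in Ω with Ψ₀ = h on ∂Ω and κ ≤ Ψ₀ ≤ Ψ on cl(Ω), and for each n ≥ 1 let Ψ_n ∈ C²(Ω) ∩ C¹(cl(Ω)) satisfy -∇·(a∇Ψ_n) + (b + cν)Ψ_n = -c(Ψ_{n-1}^{-θ} - νΨ_{n-1}) in Ω with Ψ_n = h on ∂Ω. Then for every n ≥ 0 one has κ ≤ Ψ_n ≤ Ψ_{n+1}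 ≤ Ψ in Ω; consequently, for every x ∈ Ω the sequence (Ψ_n(x)) is nondecreasing, bounded above by Ψ(x), and convergent. -/
open Real Set MeasureTheory Filter Topology

/-!
With `q = b + cν ≥ 0`, write `L u = -∇·(a∇u) + q u`. Each iterate solves
`L Ψ_{n+1} = -c g(Ψ_n)`, where `g(z) = z^{-θ} - νz`, while `Ψ` satisfies `L Ψ = -c g(Ψ)` and
`Ψ₀` satisfies `L Ψ₀ ≤ -c g(Ψ₀)`. The choice of `ν` makes `g` nondecreasing on `[κ, ∞)` and
`-c ≥ 0`, so ordered data give ordered right-hand sides and the comparison principle for `L` gives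
ordered solutions: `κ ≤ Ψ_n ≤ Ψ_{n+1} ≤ Ψ` follows by induction.

The comparison principle is a maximum principle: a function cannot have an interior maximum where
`∇·(a∇w) > 0`, and the weak inequality `≥` is made strict by adding a small multiple of the barrier
`exp (lam * x_j)`, whose image under `∇·(a∇ ·)` is positive once `lam` dominates `|∇a| / a`.
-/

section Directional

variable {E : Type*} [NormedAddCommGroup E] [NormedSpace ℝ E] {a u v : E → ℝ} {x : E}

lemma eventually_differentiableAt_of_contDiffAt_two (hu : ContDiffAt ℝ 2 u x) :
    ∀ᶠ y in 𝓝 x, DifferentiableAt ℝ u y :=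
  (hu.eventually (by simp)).mono fun _ hy => hy.differentiableAt (by norm_num)

lemma differentiableAt_fderiv_apply (hu : ContDiffAt ℝ 2 u x) (e : E) :
    DifferentiableAt ℝ (fun y => fderiv ℝ u y e) x :=
  ((hu.fderiv_right (m := 1) (by norm_num)).differentiableAt (by norm_num)).clm_apply
    (differentiableAt_const _)

lemma fderiv_mul_fderiv_apply (ha : DifferentiableAt ℝ a x) (hu : ContDiffAt ℝ 2 u x) (e : E) :
    fderiv ℝ (fun y => a y * fderiv ℝ u y e) x e =
      a x * fderiv ℝ (fun y => fderiv ℝ u y e) x e + fderiv ℝ a x e * fderiv ℝ u x e := by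
  rw [fderiv_fun_mul ha (differentiableAt_fderiv_apply hu e)]
  simp only [add_apply, smul_apply, smul_eq_mul]
  ring

lemma fderiv_mul_fderiv_apply_add_smul (ha : DifferentiableAt ℝ a x) (hu : ContDiffAt ℝ 2 u x)
    (hv : ContDiffAt ℝ 2 v x) (r : ℝ) (e : E) :
    fderiv ℝ (fun y => a y * fderiv ℝ (u + r • v) y e) x e =
      fderiv ℝ (fun y => a y * fderiv ℝ u y e) x e +
        r * fderiv ℝ (fun y => a y * fderiv ℝ v y e) x e := by
  have flux : (fun y => a y * fderiv ℝ (u + r • v) y e) =ᶠ[𝓝 x]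
      fun y => a y * fderiv ℝ u y e + r * (a y * fderiv ℝ v y e) := by
    filter_upwards [eventually_differentiableAt_of_contDiffAt_two hu,
      eventually_differentiableAt_of_contDiffAt_two hv] with y huy hvy
    rw [fderiv_add huy (hvy.const_smul r), fderiv_const_smul hvy]
    simp only [add_apply, smul_apply, smul_eq_mul]
    ring
  have hv' := ha.fun_mul (differentiableAt_fderiv_apply hv e)
  rw [flux.fderiv_eq, fderiv_fun_add (ha.fun_mul (differentiableAt_fderiv_apply hu e))
    (hv'.const_mul r), fderiv_const_mul hv']
  simp only [add_apply, smul_apply, smul_eq_mul]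

lemma fderiv_mul_fderiv_exp_clm_apply (ha : DifferentiableAt ℝ a x) (l : E →L[ℝ] ℝ) (e : E) :
    fderiv ℝ (fun y => a y * fderiv ℝ (fun z => exp (l z)) y e) x e =
      exp (l x) * l e * (l e * a x + fderiv ℝ a x e) := by
  have hexp (y : E) : HasFDerivAt (fun z => exp (l z)) (exp (l y) • l) y := l.hasFDerivAt.exp
  have hexp₂ := ((hexp x).mul_const (l e)).fderiv
  rw [fderiv_mul_fderiv_apply ha l.contDiff.exp.contDiffAt]
  simp only [(hexp _).fderiv, smul_apply, smul_eq_mul, hexp₂]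
  ring

-- A positive second derivative would make the maximum a minimum too, so that `g` would be
-- constant near `t`.
lemma deriv_deriv_nonpos_of_isLocalMax {g : ℝ → ℝ} {t : ℝ} (hmax : IsLocalMax g t)
    (hg : ContinuousAt g t) : deriv (deriv g) t ≤ 0 := by
  by_contra! hpos
  have hmin := isLocalMin_of_deriv_deriv_pos hpos hmax.deriv_eq_zero hg
  have hconst : g =ᶠ[𝓝 t] fun _ => g t := by
    filter_upwards [hmax, hmin] with s hs₁ hs₂ using le_antisymm hs₁ hs₂
  have hzero : deriv (deriv g) t = 0 := by simpa using hconst.deriv.deriv_eq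
  exact hpos.ne' hzero

lemma fderiv_fderiv_apply_nonpos_of_isLocalMax (hu : ContDiffAt ℝ 2 u x) (hmax : IsLocalMax u x)
    (e : E) : fderiv ℝ (fun y => fderiv ℝ u y e) x e ≤ 0 := by
  have hline (t : ℝ) : HasDerivAt (fun t : ℝ => x + t • e) e t := by
    simpa using ((hasDerivAt_id t).smul_const e).const_add x
  have htend : Tendsto (fun t : ℝ => x + t • e) (𝓝 0) (𝓝 x) := by
    simpa using (hline 0).continuousAt.tendsto
  have hderiv : deriv (fun t : ℝ => u (x + t • e)) =ᶠ[𝓝 0] fun t => fderiv ℝ u (x + t • e) e := by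
    filter_upwards [htend.eventually (eventually_differentiableAt_of_contDiffAt_two hu)] with t ht
    exact (ht.hasFDerivAt.comp_hasDerivAt t (hline t)).deriv
  calc fderiv ℝ (fun y => fderiv ℝ u y e) x e
      = deriv (fun t : ℝ => fderiv ℝ u (x + t • e) e) 0 :=
        ((differentiableAt_fderiv_apply hu e).hasFDerivAt.hasLineDerivAt e).deriv.symm
    _ = deriv (deriv fun t : ℝ => u (x + t • e)) 0 := hderiv.deriv_eq.symm
    _ ≤ 0 := deriv_deriv_nonpos_of_isLocalMax
        (by simpa [IsLocalMax, IsMaxFilter] using htend.eventually hmax)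
        (by simpa [ContinuousAt, Function.comp_def] using hu.continuousAt.tendsto.comp htend)

end Directional

section Divergence

variable {d : ℕ} {a u v : EuclideanSpace ℝ (Fin d) → ℝ} {x : EuclideanSpace ℝ (Fin d)}

lemma divA_add_smul (ha : DifferentiableAt ℝ a x) (hu : ContDiffAt ℝ 2 u x)
    (hv : ContDiffAt ℝ 2 v x) (r : ℝ) : divA a (u + r • v) x = divA a u x + r * divA a v x := by
  simp only [divA, fderiv_mul_fderiv_apply_add_smul ha hu hv, Finset.sum_add_distrib,
    Finset.mul_sum]

lemma divA_nonpos_of_isLocalMax (ha : DifferentiableAt ℝ a x) (ha_nonneg : 0 ≤ a x)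
    (hu : ContDiffAt ℝ 2 u x) (hmax : IsLocalMax u x) : divA a u x ≤ 0 := by
  refine Finset.sum_nonpos fun i _ => ?_
  rw [fderiv_mul_fderiv_apply ha hu, hmax.fderiv_eq_zero, zero_apply, mul_zero, add_zero]
  exact mul_nonpos_of_nonneg_of_nonpos ha_nonneg
    (fderiv_fderiv_apply_nonpos_of_isLocalMax hu hmax _)

lemma divA_exp_mul_coord (ha : DifferentiableAt ℝ a x) (lam : ℝ) (j : Fin d) :
    divA a (fun y => exp (lam * y j)) x =
      exp (lam * x j) * lam * (lam * a x + fderiv ℝ a x (EuclideanSpace.single j 1)) := by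
  let l : EuclideanSpace ℝ (Fin d) →L[ℝ] ℝ := lam • EuclideanSpace.proj j
  have hl (i : Fin d) : l (EuclideanSpace.single i 1) = if j = i then lam else 0 := by
    simp [l, PiLp.single_apply]
  refine (Finset.sum_congr rfl fun i _ => fderiv_mul_fderiv_exp_clm_apply ha l _).trans ?_
  rw [Finset.sum_eq_single j (fun i _ hij => by simp [hl, hij.symm]) (by simp), hl, if_pos rfl]
  rfl

end Divergence

/-- The conditions on the coefficient `a` under which `∇·(a∇u)` obeys the maximum principle on a
bounded `Ω`: uniform ellipticity, and bounded first-order coefficients once the divergence is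
expanded as `aΔu + ∇a·∇u`. -/
structure IsEllipticCoeffOn {d : ℕ} (a : EuclideanSpace ℝ (Fin d) → ℝ)
    (Ω : Set (EuclideanSpace ℝ (Fin d))) : Prop where
  differentiableAt : ∀ x ∈ Ω, DifferentiableAt ℝ a x
  exists_pos_le : ∃ a₀ > 0, ∀ x ∈ Ω, a₀ ≤ a x
  exists_norm_fderiv_le : ∃ M, ∀ x ∈ Ω, ‖fderiv ℝ a x‖ ≤ M

namespace IsEllipticCoeffOn

variable {d : ℕ} {Ω : Set (EuclideanSpace ℝ (Fin d))} {a : EuclideanSpace ℝ (Fin d) → ℝ}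

lemma of_contDiffOn {U : Set (EuclideanSpace ℝ (Fin d))} (hΩ : Bornology.IsBounded Ω)
    (hU : IsOpen U) (hΩU : closure Ω ⊆ U) (ha : ContDiffOn ℝ 1 a U) {a₀ : ℝ} (ha₀ : 0 < a₀)
    (hle : ∀ x ∈ Ω, a₀ ≤ a x) : IsEllipticCoeffOn a Ω where
  differentiableAt _ hx :=
    (ha.contDiffAt (hU.mem_nhds (hΩU (subset_closure hx)))).differentiableAt one_ne_zero
  exists_pos_le := ⟨a₀, ha₀, hle⟩
  exists_norm_fderiv_le :=
    let ⟨M, hM⟩ := hΩ.isCompact_closure.exists_bound_of_continuousOn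
      ((ha.continuousOn_fderiv_of_isOpen hU le_rfl).mono hΩU)
    ⟨M, fun x hx => hM x (subset_closure hx)⟩

lemma nonneg (ha : IsEllipticCoeffOn a Ω) {x : EuclideanSpace ℝ (Fin d)} (hx : x ∈ Ω) :
    0 ≤ a x :=
  let ⟨_, ha₀, hle⟩ := ha.exists_pos_le
  ha₀.le.trans (hle x hx)

lemma exists_contDiff_divA_pos (ha : IsEllipticCoeffOn a Ω) (hd : 1 ≤ d) :
    ∃ φ : EuclideanSpace ℝ (Fin d) → ℝ,
      ContDiff ℝ 2 φ ∧ (∀ x, 0 < φ x) ∧ ∀ x ∈ Ω, 0 < divA a φ x := by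
  obtain ⟨a₀, ha₀, hle⟩ := ha.exists_pos_le
  obtain ⟨M, hM⟩ := ha.exists_norm_fderiv_le
  let j : Fin d := ⟨0, hd⟩
  obtain ⟨lam, hlam, hlam_mul⟩ : ∃ lam : ℝ, 0 < lam ∧ M < lam * a₀ :=
    ⟨(|M| + 1) / a₀, by positivity, by
      rw [div_mul_cancel₀ _ ha₀.ne']
      exact (le_abs_self M).trans_lt (lt_add_one _)⟩
  refine ⟨fun x => exp (lam * x j), by fun_prop, fun x => exp_pos _, fun x hx => ?_⟩
  have hdrift : |fderiv ℝ a x (EuclideanSpace.single j 1)| ≤ M := by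
    simpa using (fderiv ℝ a x).le_of_opNorm_le (hM x hx) (EuclideanSpace.single j 1)
  have hlam_le : lam * a₀ ≤ lam * a x := by gcongr; exact hle x hx
  rw [divA_exp_mul_coord (ha.differentiableAt x hx)]
  exact mul_pos (by positivity) (by linarith [neg_le_of_abs_le hdrift])

end IsEllipticCoeffOn

section MaximumPrinciple

variable {d : ℕ} {Ω : Set (EuclideanSpace ℝ (Fin d))} {a : EuclideanSpace ℝ (Fin d) → ℝ}

lemma le_of_divA_pos_of_lt (hΩo : IsOpen Ω) (hΩb : Bornology.IsBounded Ω)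
    (ha : ∀ x ∈ Ω, DifferentiableAt ℝ a x) (ha_nonneg : ∀ x ∈ Ω, 0 ≤ a x)
    {w : EuclideanSpace ℝ (Fin d) → ℝ} {m : ℝ} (hw₂ : ContDiffOn ℝ 2 w Ω)
    (hw : ContinuousOn w (closure Ω)) (hbd : ∀ x ∈ frontier Ω, w x ≤ m)
    (hdiv : ∀ x ∈ Ω, m < w x → 0 < divA a w x) : ∀ x ∈ closure Ω, w x ≤ m := by
  intro x hx
  obtain ⟨y, hy, hmax⟩ := hΩb.isCompact_closure.exists_isMaxOn ⟨x, hx⟩ hw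
  refine (hmax hx).trans (not_lt.1 fun hlt => ?_)
  have hyΩ : y ∈ Ω := by
    by_contra hy'
    exact hlt.not_ge (hbd y ⟨hy, by rwa [hΩo.interior_eq]⟩)
  have hnhds := hΩo.mem_nhds hyΩ
  have hloc : IsLocalMax w y := hmax.isLocalMax (mem_of_superset hnhds subset_closure)
  exact (hdiv y hyΩ hlt).not_ge (divA_nonpos_of_isLocalMax (ha y hyΩ) (ha_nonneg y hyΩ)
    (hw₂.contDiffAt hnhds) hloc)

lemma le_of_divA_nonneg_of_lt (hd : 1 ≤ d) (hΩo : IsOpen Ω) (hΩb : Bornology.IsBounded Ω)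
    (ha : IsEllipticCoeffOn a Ω) {w : EuclideanSpace ℝ (Fin d) → ℝ} {m : ℝ}
    (hw₂ : ContDiffOn ℝ 2 w Ω) (hw : ContinuousOn w (closure Ω))
    (hbd : ∀ x ∈ frontier Ω, w x ≤ m) (hdiv : ∀ x ∈ Ω, m < w x → 0 ≤ divA a w x) :
    ∀ x ∈ closure Ω, w x ≤ m := by
  intro x hx
  obtain ⟨φ, hφ₂, hφ_pos, hφ_div⟩ := ha.exists_contDiff_divA_pos hd
  obtain ⟨B, hB⟩ := hΩb.isCompact_closure.exists_bound_of_continuousOn hφ₂.continuous.continuousOn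
  have hφB : ∀ y ∈ closure Ω, φ y ≤ B := fun y hy => (le_abs_self _).trans (hB y hy)
  have hB_pos : 0 < B := (hφ_pos x).trans_le (hφB x hx)
  have perturbed {ε : ℝ} (hε : 0 < ε) : ∀ y ∈ closure Ω, (w + ε • φ) y ≤ m + ε * B := by
    have hεφ : ∀ y ∈ closure Ω, ε * φ y ≤ ε * B := fun y hy => by gcongr; exact hφB y hy
    refine le_of_divA_pos_of_lt hΩo hΩb ha.differentiableAt (fun _ => ha.nonneg)
      (hw₂.add (hφ₂.contDiffOn.const_smul ε)) (hw.add (hφ₂.continuous.continuousOn.const_smul ε))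
      (fun y hy => add_le_add (hbd y hy) (hεφ y hy.1)) fun y hy hlt => ?_
    rw [divA_add_smul (ha.differentiableAt y hy) (hw₂.contDiffAt (hΩo.mem_nhds hy))
      hφ₂.contDiffAt]
    have hlt : m + ε * B < w y + ε * φ y := hlt
    have hmw : m < w y := by linarith [hεφ y (subset_closure hy)]
    exact add_pos_of_nonneg_of_pos (hdiv y hy hmw) (mul_pos hε (hφ_div y hy))
  refine le_of_forall_pos_le_add fun δ hδ => ?_
  calc w x ≤ w x + δ / B * φ x := le_add_of_nonneg_right (by have := hφ_pos x; positivity)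
    _ ≤ m + δ / B * B := perturbed (div_pos hδ hB_pos) x hx
    _ = m + δ := by rw [div_mul_cancel₀ _ hB_pos.ne']

lemma le_of_neg_divA_add_mul_le (hd : 1 ≤ d) (hΩo : IsOpen Ω) (hΩb : Bornology.IsBounded Ω)
    (ha : IsEllipticCoeffOn a Ω) {q u v : EuclideanSpace ℝ (Fin d) → ℝ}
    (hq : ∀ x ∈ Ω, 0 ≤ q x) (hu₂ : ContDiffOn ℝ 2 u Ω) (hv₂ : ContDiffOn ℝ 2 v Ω)
    (hu : ContinuousOn u (closure Ω)) (hv : ContinuousOn v (closure Ω))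
    (hbd : ∀ x ∈ frontier Ω, u x ≤ v x)
    (hop : ∀ x ∈ Ω, -divA a u x + q x * u x ≤ -divA a v x + q x * v x) :
    ∀ x ∈ closure Ω, u x ≤ v x := by
  have hdiff (x : EuclideanSpace ℝ (Fin d)) : (u + (-1 : ℝ) • v) x = u x - v x := by
    simp [sub_eq_add_neg]
  suffices ∀ x ∈ closure Ω, (u + (-1 : ℝ) • v) x ≤ 0 from
    fun x hx => sub_nonpos.1 ((hdiff x).symm.trans_le (this x hx))
  refine le_of_divA_nonneg_of_lt hd hΩo hΩb ha (hu₂.add (hv₂.const_smul (-1 : ℝ)))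
    (hu.add (hv.const_smul (-1 : ℝ))) (fun x hx => (hdiff x).trans_le (sub_nonpos.2 (hbd x hx)))
    fun x hx hpos => ?_
  have hnhds := hΩo.mem_nhds hx
  rw [divA_add_smul (ha.differentiableAt x hx) (hu₂.contDiffAt hnhds) (hv₂.contDiffAt hnhds)]
  rw [hdiff] at hpos
  linarith [hop x hx, mul_nonneg (hq x hx) hpos.le]

lemma le_of_neg_divA_add_mul_le_monotoneOn (hd : 1 ≤ d) (hΩo : IsOpen Ω)
    (hΩb : Bornology.IsBounded Ω) (ha : IsEllipticCoeffOn a Ω)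
    {q u v u₀ v₀ : EuclideanSpace ℝ (Fin d) → ℝ} {g : EuclideanSpace ℝ (Fin d) → ℝ → ℝ}
    {s : EuclideanSpace ℝ (Fin d) → Set ℝ} (hq : ∀ x ∈ Ω, 0 ≤ q x)
    (hg : ∀ x ∈ Ω, MonotoneOn (g x) (s x))
    (hu₂ : ContDiffOn ℝ 2 u Ω) (hv₂ : ContDiffOn ℝ 2 v Ω)
    (hu : ContinuousOn u (closure Ω)) (hv : ContinuousOn v (closure Ω))
    (hbd : ∀ x ∈ frontier Ω, u x ≤ v x)
    (hu_sub : ∀ x ∈ Ω, -divA a u x + q x * u x ≤ g x (u₀ x))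
    (hv_super : ∀ x ∈ Ω, g x (v₀ x) ≤ -divA a v x + q x * v x)
    (hu₀ : ∀ x ∈ Ω, u₀ x ∈ s x) (hv₀ : ∀ x ∈ Ω, v₀ x ∈ s x) (hle : ∀ x ∈ Ω, u₀ x ≤ v₀ x) :
    ∀ x ∈ closure Ω, u x ≤ v x :=
  le_of_neg_divA_add_mul_le hd hΩo hΩb ha hq hu₂ hv₂ hu hv hbd fun x hx =>
    (hu_sub x hx).trans ((hg x hx (hu₀ x hx) (hv₀ x hx) (hle x hx)).trans (hv_super x hx))

end MaximumPrinciple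

lemma monotone_iteration_between_sub_super {d : ℕ} (hd : 1 ≤ d)
    {Ω : Set (EuclideanSpace ℝ (Fin d))} (hΩo : IsOpen Ω) (hΩb : Bornology.IsBounded Ω)
    {a q v : EuclideanSpace ℝ (Fin d) → ℝ} (ha : IsEllipticCoeffOn a Ω)
    (hq : ∀ x ∈ Ω, 0 ≤ q x) {g : EuclideanSpace ℝ (Fin d) → ℝ → ℝ}
    {u : ℕ → EuclideanSpace ℝ (Fin d) → ℝ}
    (hg : ∀ x ∈ Ω, MonotoneOn (g x) (Icc (u 0 x) (v x)))
    (hu₂ : ∀ n, ContDiffOn ℝ 2 (u n) Ω) (hu : ∀ n, ContinuousOn (u n) (closure Ω))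
    (hv₂ : ContDiffOn ℝ 2 v Ω) (hv : ContinuousOn v (closure Ω))
    (hu_sub : ∀ x ∈ Ω, -divA a (u 0) x + q x * u 0 x ≤ g x (u 0 x))
    (hu_succ : ∀ n, ∀ x ∈ Ω, -divA a (u (n + 1)) x + q x * u (n + 1) x = g x (u n x))
    (hv_super : ∀ x ∈ Ω, g x (v x) ≤ -divA a v x + q x * v x)
    (huv : ∀ x ∈ Ω, u 0 x ≤ v x) (hbd_succ : ∀ n, ∀ x ∈ frontier Ω, u n x ≤ u (n + 1) x)
    (hbd_le : ∀ n, ∀ x ∈ frontier Ω, u (n + 1) x ≤ v x) (n : ℕ) :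
    ∀ x ∈ Ω, u 0 x ≤ u n x ∧ u n x ≤ u (n + 1) x ∧ u (n + 1) x ≤ v x := by
  have succ_le (n : ℕ) (hn : ∀ x ∈ Ω, u n x ∈ Icc (u 0 x) (v x)) :
      ∀ x ∈ closure Ω, u (n + 1) x ≤ v x :=
    le_of_neg_divA_add_mul_le_monotoneOn hd hΩo hΩb ha hq hg (hu₂ _) hv₂ (hu _) hv
      (hbd_le n) (fun x hx => (hu_succ n x hx).le) hv_super hn
      (fun x hx => right_mem_Icc.2 (huv x hx)) (fun x hx => (hn x hx).2)
  induction n with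
  | zero =>
    have hzero : ∀ x ∈ Ω, u 0 x ∈ Icc (u 0 x) (v x) := fun x hx => left_mem_Icc.2 (huv x hx)
    have zero_le_first := le_of_neg_divA_add_mul_le_monotoneOn hd hΩo hΩb ha hq hg
      (hu₂ 0) (hu₂ 1) (hu 0) (hu 1) (hbd_succ 0) hu_sub (fun x hx => (hu_succ 0 x hx).ge)
      hzero hzero fun _ _ => le_rfl
    exact fun x hx => ⟨le_rfl, zero_le_first x (subset_closure hx),
      succ_le 0 hzero x (subset_closure hx)⟩
  | succ n ih =>
    have hn : ∀ x ∈ Ω, u n x ∈ Icc (u 0 x) (v x) := fun x hx =>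
      ⟨(ih x hx).1, (ih x hx).2.1.trans (ih x hx).2.2⟩
    have hsucc : ∀ x ∈ Ω, u (n + 1) x ∈ Icc (u 0 x) (v x) := fun x hx =>
      ⟨(ih x hx).1.trans (ih x hx).2.1, (ih x hx).2.2⟩
    have succ_le_succ := le_of_neg_divA_add_mul_le_monotoneOn hd hΩo hΩb ha hq hg
      (hu₂ (n + 1)) (hu₂ (n + 2)) (hu _) (hu _) (hbd_succ (n + 1))
      (fun x hx => (hu_succ n x hx).le) (fun x hx => (hu_succ (n + 1) x hx).ge)
      hn hsucc fun x hx => (ih x hx).2.1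
    exact fun x hx => ⟨(hsucc x hx).1, succ_le_succ x (subset_closure hx),
      succ_le (n + 1) hsucc x (subset_closure hx)⟩

-- `-θ κ^{-(1+θ)}` is the least slope of the convex function `z ↦ z^{-θ}` on `[κ, ∞)`.
lemma monotoneOn_rpow_neg_sub_mul {θ κ ν : ℝ} (hθ : 0 ≤ θ) (hκ : 0 < κ)
    (hν : ν ≤ -θ * κ ^ (-(1 + θ))) : MonotoneOn (fun z : ℝ => z ^ (-θ) - ν * z) (Ici κ) := by
  have hderiv : ∀ z ∈ Ici κ, HasDerivAt (fun z : ℝ => z ^ (-θ) - ν * z)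
      (-θ * z ^ (-θ - 1) - ν * 1) z := fun z hz =>
    (hasDerivAt_rpow_const (Or.inl (hκ.trans_le hz).ne')).sub ((hasDerivAt_id z).const_mul ν)
  refine monotoneOn_of_hasDerivWithinAt_nonneg (convex_Ici κ)
    (fun z hz => (hderiv z hz).continuousAt.continuousWithinAt)
    (fun z hz => (hderiv z (interior_subset hz)).hasDerivWithinAt) fun z hz => ?_
  have hpow : z ^ (-θ - 1) ≤ κ ^ (-θ - 1) :=
    rpow_le_rpow_of_nonpos hκ (interior_subset hz) (by linarith)
  rw [show -(1 + θ) = -θ - 1 by ring] at hν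
  linarith [mul_le_mul_of_nonneg_left hpow hθ]

lemma exists_le_tendsto_of_le_succ {u : ℕ → ℝ} {B : ℝ} (hsucc : ∀ n, u n ≤ u (n + 1))
    (hle : ∀ n, u n ≤ B) : ∃ L ≤ B, Tendsto u atTop (𝓝 L) :=
  ⟨⨆ n, u n, ciSup_le hle,
    tendsto_atTop_ciSup (monotone_nat_of_le_succ hsucc) ⟨B, forall_mem_range.2 hle⟩⟩

theorem stmt17_general {d : ℕ} (hd : 1 ≤ d) {Ω : Set (EuclideanSpace ℝ (Fin d))}
    (hΩo : IsOpen Ω) (hΩb : Bornology.IsBounded Ω) {a b c : EuclideanSpace ℝ (Fin d) → ℝ}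
    (ha : IsEllipticCoeffOn a Ω) {f : ℝ → ℝ} {κ ν : ℝ}
    (hf : MonotoneOn (fun z => f z - ν * z) (Ici κ))
    (hq : ∀ x ∈ Ω, 0 ≤ b x + c x * ν) (hc : ∀ x ∈ Ω, c x ≤ 0)
    {Ψ : EuclideanSpace ℝ (Fin d) → ℝ} (hΨ₂ : ContDiffOn ℝ 2 Ψ Ω)
    (hΨ : ContinuousOn Ψ (closure Ω))
    (hΨ_super : ∀ x ∈ Ω, divA a Ψ x ≤ b x * Ψ x + c x * f (Ψ x))
    {Ψseq : ℕ → EuclideanSpace ℝ (Fin d) → ℝ} (hseq₂ : ∀ n, ContDiffOn ℝ 2 (Ψseq n) Ω)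
    (hseq : ∀ n, ContinuousOn (Ψseq n) (closure Ω))
    (hzero_sub : ∀ x ∈ Ω, -divA a (Ψseq 0) x + b x * Ψseq 0 x ≤ -c x * f (Ψseq 0 x))
    (hzero_mem : ∀ x ∈ Ω, κ ≤ Ψseq 0 x ∧ Ψseq 0 x ≤ Ψ x)
    (hsucc : ∀ n, ∀ x ∈ Ω, -divA a (Ψseq (n + 1)) x + (b x + c x * ν) * Ψseq (n + 1) x =
      -c x * (f (Ψseq n x) - ν * Ψseq n x))
    (hbd_succ : ∀ n, ∀ x ∈ frontier Ω, Ψseq n x ≤ Ψseq (n + 1) x)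
    (hbd_le : ∀ n, ∀ x ∈ frontier Ω, Ψseq (n + 1) x ≤ Ψ x) :
    (∀ n, ∀ x ∈ Ω, κ ≤ Ψseq n x ∧ Ψseq n x ≤ Ψseq (n + 1) x ∧ Ψseq (n + 1) x ≤ Ψ x) ∧
      ∀ x ∈ Ω, ∃ L ≤ Ψ x, Tendsto (fun n => Ψseq n x) atTop (𝓝 L) := by
  have source_mono : ∀ x ∈ Ω,
      MonotoneOn (fun z => -c x * (f z - ν * z)) (Icc (Ψseq 0 x) (Ψ x)) := fun x hx =>
    ((monotone_mul_left_of_nonneg (neg_nonneg.2 (hc x hx))).comp_monotoneOn hf).mono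
      fun _ hz => (hzero_mem x hx).1.trans hz.1
  have chain := monotone_iteration_between_sub_super hd hΩo hΩb ha hq source_mono hseq₂ hseq
    hΨ₂ hΨ (fun x hx => by linarith [hzero_sub x hx]) hsucc
    (fun x hx => by linarith [hΨ_super x hx]) (fun x hx => (hzero_mem x hx).2)
    hbd_succ hbd_le
  exact ⟨fun n x hx => ⟨(hzero_mem x hx).1.trans (chain n x hx).1, (chain n x hx).2⟩,
    fun x hx => exists_le_tendsto_of_le_succ (fun n => (chain n x hx).2.1)
      fun n => (chain n x hx).2.1.trans (chain n x hx).2.2⟩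

theorem stmt17 {d : ℕ} (hd : 1 ≤ d) (Ω U : Set (EuclideanSpace ℝ (Fin d)))
    (hΩo : IsOpen Ω) (hΩb : Bornology.IsBounded Ω)
    (hU : IsOpen U) (hUΩ : closure Ω ⊆ U)
    (a b c : EuclideanSpace ℝ (Fin d) → ℝ)
    (ha : ContDiffOn ℝ 1 a U) (a₀ : ℝ) (ha₀ : 0 < a₀) (halb : ∀ x ∈ Ω, a₀ ≤ a x)
    (hbcont : ContinuousOn b (closure Ω)) (hccont : ContinuousOn c (closure Ω))
    (θ : ℝ) (hθ : 0 ≤ θ)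
    (hbnn : ∀ x ∈ Ω, 0 ≤ b x) (hcnp : ∀ x ∈ Ω, c x ≤ 0)
    (h : EuclideanSpace ℝ (Fin d) → ℝ) (hhpos : ∀ x ∈ frontier Ω, 0 < h x)
    (κ : ℝ) (hκ : 0 < κ) (ν : ℝ) (hν : ν = -θ * κ ^ (-(1 + θ)))
    (Ψ : EuclideanSpace ℝ (Fin d) → ℝ)
    (hΨ2 : ContDiffOn ℝ 2 Ψ Ω) (hΨ1 : ContDiffOn ℝ 1 Ψ (closure Ω))
    (hΨlb : ∀ x ∈ closure Ω, κ ≤ Ψ x)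
    (hΨeq : ∀ x ∈ Ω, divA a Ψ x = b x * Ψ x + c x * Ψ x ^ (-θ))
    (hΨbd : ∀ x ∈ frontier Ω, Ψ x = h x)
    (Ψseq : ℕ → EuclideanSpace ℝ (Fin d) → ℝ)
    (hseq2 : ∀ n, ContDiffOn ℝ 2 (Ψseq n) Ω)
    (hseq1 : ∀ n, ContDiffOn ℝ 1 (Ψseq n) (closure Ω))
    (hseq0 : ∀ x ∈ Ω, -divA a (Ψseq 0) x + b x * Ψseq 0 x = 0)
    (hseq0bounds : ∀ x ∈ closure Ω, κ ≤ Ψseq 0 x ∧ Ψseq 0 x ≤ Ψ x)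
    (hseqn : ∀ n : ℕ, ∀ x ∈ Ω,
      -divA a (Ψseq (n + 1)) x + (b x + c x * ν) * Ψseq (n + 1) x
        = -c x * ((Ψseq n x) ^ (-θ) - ν * Ψseq n x))
    (hseqbd : ∀ n, ∀ x ∈ frontier Ω, Ψseq n x = h x) :
    (∀ n : ℕ, ∀ x ∈ Ω,
      κ ≤ Ψseq n x ∧ Ψseq n x ≤ Ψseq (n + 1) x ∧ Ψseq (n + 1) x ≤ Ψ x) ∧
      ∀ x ∈ Ω, ∃ L : ℝ, L ≤ Ψ x ∧
        Filter.Tendsto (fun n => Ψseq n x) Filter.atTop (nhds L) := by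
  have hν_nonpos : ν ≤ 0 :=
    hν.trans_le (mul_nonpos_of_nonpos_of_nonneg (neg_nonpos.2 hθ) (by positivity))
  exact stmt17_general hd hΩo hΩb (.of_contDiffOn hΩb hU hUΩ ha ha₀ halb)
    (monotoneOn_rpow_neg_sub_mul hθ hκ hν.le)
    (fun x hx => add_nonneg (hbnn x hx) (mul_nonneg_of_nonpos_of_nonpos (hcnp x hx) hν_nonpos))
    hcnp hΨ2 hΨ1.continuousOn (fun x hx => (hΨeq x hx).le)
    hseq2 (fun n => (hseq1 n).continuousOn)
    (fun x hx => (hseq0 x hx).trans_le (mul_nonneg (neg_nonneg.2 (hcnp x hx))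
      (rpow_nonneg (hκ.le.trans (hseq0bounds x (subset_closure hx)).1) _)))
    (fun x hx => hseq0bounds x (subset_closure hx)) hseqn
    (fun n x hx => ((hseqbd n x hx).trans (hseqbd (n + 1) x hx).symm).le)
    (fun n x hx => ((hseqbd (n + 1) x hx).trans (hΨbd x hx).symm).le)
end
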